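/- arXiv:2203.14521 — 8 statements merged into one kernel-verified Lean document; each statement's English description precedes it below -/
import Mathlib

section
/- For a finite quiver Q without loops and multiedges, the dimension of the directed edge polytope DE(Q) equals |Q_0| − |π_0(Q)| − 1 if Q admits a rank function, and equals |Q_0| − |π_0(Q)| otherwise. -/
open scoped BigOperators

/-- The vector `ε_(v,w) = e_v - e_w` in `ℝ^V`. -/
def epsVec {V : Type*} [DecidableEq V] (e : V × V) : V → ℝ :=
  fun u => (if u = e.1 then (1 : ℝ) else 0) - (if u = e.2 then (1 : ℝ) else 0)

/-- The directed edge polytope of the quiver with edge set `E`. -/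
def DE {V : Type*} [DecidableEq V] (E : Set (V × V)) : Set (V → ℝ) :=
  convexHull ℝ (epsVec '' E)

/-- The edge relation of a quiver. -/
def edgeRel {V : Type*} (E : Set (V × V)) : V → V → Prop := fun a b => (a, b) ∈ E

/-- Number of connected components (with respect to undirected walks). -/
noncomputable def numComponents {V : Type*} (E : Set (V × V)) : ℕ :=
  Nat.card (Quot (Relation.EqvGen (edgeRel E)))

/-- `E` admits a rank function. -/
def HasRankFn {V : Type*} (E : Set (V × V)) : Prop :=
  ∃ ρ : V → ℝ, ∀ e ∈ E, ρ e.1 + 1 = ρ e.2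

open Classical in
/-- Dimension of a polytope: dimension of its affine hull, `-1` for the empty set. -/
noncomputable def polyDim {V : Type*} (s : Set (V → ℝ)) : ℤ :=
  if s = ∅ then -1 else (Module.finrank ℝ (affineSpan ℝ s).direction : ℤ)

/-- `F` is a face of `P`: `F = P` or `F` is the intersection of `P`
with a supporting hyperplane. -/
def IsFaceOf {V : Type*} (F P : Set (V → ℝ)) : Prop :=
  F = P ∨ ∃ (l : (V → ℝ) →ₗ[ℝ] ℝ) (c : ℝ), (∀ x ∈ P, l x ≤ c) ∧ F = {x ∈ P | l x = c}

/-- `F` is a facet of `P`: a face of dimension `dim P - 1`. -/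
def IsFacetOf {V : Type*} (F P : Set (V → ℝ)) : Prop :=
  IsFaceOf F P ∧ polyDim F = polyDim P - 1

/-- Each connected component of the subquiver `R1` is a full subquiver of `Q1`. -/
def ComponentsFull {V : Type*} (Q1 R1 : Set (V × V)) : Prop :=
  ∀ v w : V, Relation.EqvGen (edgeRel R1) v w → (v, w) ∈ Q1 → (v, w) ∈ R1

/-- Edge set of the contraction `Q/R`. -/
def contraction {V : Type*} (Q1 R1 : Set (V × V)) :
    Set (Quot (Relation.EqvGen (edgeRel R1)) × Quot (Relation.EqvGen (edgeRel R1))) :=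
  {p | ∃ e ∈ Q1 \ R1, p = (Quot.mk _ e.1, Quot.mk _ e.2)}

/-- A quiver is acyclic if it has no closed directed walk of length `> 1`. -/
def IsAcyclicQ {α : Type*} (E : Set (α × α)) : Prop :=
  ¬ ∃ (n : ℕ) (v : Fin (n + 1) → α), 1 < n ∧ v 0 = v (Fin.last n) ∧
      ∀ i : Fin n, (v i.castSucc, v i.succ) ∈ E

lemma epsVec_eq_single {V : Type*} [DecidableEq V] (e : V × V) :
    epsVec e = Pi.single e.1 (1 : ℝ) - Pi.single e.2 (1 : ℝ) := by
  funext u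
  simp [epsVec, Pi.single_apply]

lemma eqvGen_mk_eq {V : Type*} [DecidableEq V] (E : Set (V × V))
    (a b : V) (h : Relation.EqvGen (edgeRel E) a b) :
    (Submodule.span ℝ (epsVec '' E)).mkQ (Pi.single a (1 : ℝ)) =
      (Submodule.span ℝ (epsVec '' E)).mkQ (Pi.single b (1 : ℝ)) := by
  induction h with
  | rel x y h =>
    have : epsVec (x, y) ∈ Submodule.span ℝ (epsVec '' E) :=
      Submodule.subset_span ⟨(x, y), h, rfl⟩
    rw [epsVec_eq_single] at this
    exact (Submodule.Quotient.eq _).2 this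
  | refl x => rfl
  | symm x y _ ih => exact ih.symm
  | trans x y z _ _ ih1 ih2 => exact ih1.trans ih2

lemma finrank_span_eps {V : Type*} [Fintype V] [DecidableEq V] (E : Set (V × V)) :
    numComponents E + Module.finrank ℝ (Submodule.span ℝ (epsVec '' E)) = Fintype.card V := by
  classical
  set W := Submodule.span ℝ (epsVec '' E) with hW
  let C := Quot (Relation.EqvGen (edgeRel E))
  let _ : Fintype C := Fintype.ofFinite C
  let p : (V → ℝ) →ₗ[ℝ] (C → ℝ) :=
    Fintype.linearCombination ℝ (fun v => Pi.single (Quot.mk _ v : C) (1 : ℝ))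
  let s : (C → ℝ) →ₗ[ℝ] (V → ℝ) :=
    Fintype.linearCombination ℝ (fun q : C => Pi.single q.out (1 : ℝ))
  have hp : ∀ v, p (Pi.single v 1) = Pi.single (Quot.mk _ v : C) (1 : ℝ) := by
    intro v
    simp [p, Fintype.linearCombination_apply_single]
  have hs : ∀ q, s (Pi.single q 1) = Pi.single q.out (1 : ℝ) := by
    intro v
    simp [s, Fintype.linearCombination_apply_single]
  have hps : p ∘ₗ s = LinearMap.id := by
    refine (Pi.basisFun ℝ C).ext fun q => ?_
    simp only [Pi.basisFun_apply, LinearMap.comp_apply, hs, hp, LinearMap.id_apply]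
    congr 1
    exact Quot.out_eq q
  have hsurj : LinearMap.range p = ⊤ := by
    rw [LinearMap.range_eq_top]
    intro y
    exact ⟨s y, LinearMap.congr_fun hps y⟩
  have hq : W.mkQ ∘ₗ s ∘ₗ p = W.mkQ := by
    refine (Pi.basisFun ℝ V).ext fun v => ?_
    simp only [Pi.basisFun_apply, LinearMap.comp_apply, hs, hp]
    let f : C → (V → ℝ) ⧸ W :=
      Quot.lift (fun v => W.mkQ (Pi.single v (1 : ℝ))) (eqvGen_mk_eq E)
    exact congrArg f (Quot.out_eq (Quot.mk _ v : C))
  have hker : LinearMap.ker p = W := by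
    apply le_antisymm
    · intro x hx
      have h := LinearMap.congr_fun hq x
      rw [LinearMap.mem_ker] at hx
      simp only [LinearMap.comp_apply, hx, map_zero] at h
      exact (Submodule.Quotient.mk_eq_zero _).1 h.symm
    · rw [hW, Submodule.span_le]
      rintro _ ⟨e, he, rfl⟩
      simp only [SetLike.mem_coe, LinearMap.mem_ker]
      rw [epsVec_eq_single, map_sub, hp, hp, sub_eq_zero]
      congr 1
      exact Quot.sound (Relation.EqvGen.rel _ _ he)
  have h := LinearMap.finrank_range_add_finrank_ker p
  rw [hsurj, hker, finrank_top, Module.finrank_fintype_fun_eq_card,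
    Module.finrank_fintype_fun_eq_card, ← Nat.card_eq_fintype_card (α := C)] at h
  exact h

lemma dual_eps {V : Type*} [DecidableEq V] (E : Set (V × V))
    (l : (V → ℝ) →ₗ[ℝ] ℝ) (h : ∀ e ∈ E, l (epsVec e) = 1) : HasRankFn E := by
  refine ⟨fun v => - l (Pi.single v 1), fun e he => ?_⟩
  have := h e he
  rw [epsVec_eq_single, map_sub] at this
  linarith

lemma span_eq_sup {M : Type*} [AddCommGroup M] [Module ℝ M] (S : Set M) (x : M) (hx : x ∈ S) :
    Submodule.span ℝ S = vectorSpan ℝ S ⊔ Submodule.span ℝ {x} := by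
  apply le_antisymm
  · rw [Submodule.span_le]
    intro y hy
    have h1 : y - x ∈ vectorSpan ℝ S := vsub_mem_vectorSpan ℝ hy hx
    have := Submodule.add_mem_sup h1 (Submodule.mem_span_singleton_self (R := ℝ) x)
    simpa using this
  · refine sup_le ?_ (Submodule.span_mono (by simpa using hx))
    rw [vectorSpan_def, Submodule.span_le]
    rintro _ ⟨a, ha, b, hb, rfl⟩
    exact Submodule.sub_mem _ (Submodule.subset_span ha) (Submodule.subset_span hb)

lemma vectorSpan_le_ker {M : Type*} [AddCommGroup M] [Module ℝ M] (S : Set M) (l : M →ₗ[ℝ] ℝ)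
    (h : ∀ x ∈ S, l x = 1) : vectorSpan ℝ S ≤ LinearMap.ker l := by
  rw [vectorSpan_def, Submodule.span_le]
  rintro _ ⟨a, ha, b, hb, rfl⟩
  simp [h a ha, h b hb]

/-- Theorem 1 (dimension of the directed edge polytope). -/
theorem dim_directed_edge_polytope {V : Type*} [Fintype V] [DecidableEq V]
    (Q1 : Set (V × V)) (hloop : ∀ v : V, (v, v) ∉ Q1) :
    (HasRankFn Q1 →
      polyDim (DE Q1) = (Fintype.card V : ℤ) - (numComponents Q1 : ℤ) - 1) ∧
    (¬ HasRankFn Q1 →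
      polyDim (DE Q1) = (Fintype.card V : ℤ) - (numComponents Q1 : ℤ)) := by
  have hdim := finrank_span_eps Q1
  rcases Q1.eq_empty_or_nonempty with rfl | ⟨e0, he0⟩
  · constructor
    · intro _
      rw [Set.image_empty, Submodule.span_empty, finrank_bot] at hdim
      simp only [polyDim, DE, Set.image_empty, convexHull_empty, if_true]
      omega
    · intro h
      exact absurd ⟨fun _ => 0, by simp⟩ h
  have hx : epsVec e0 ∈ epsVec '' Q1 := ⟨e0, he0, rfl⟩
  have hne : DE Q1 ≠ ∅ := by
    have : (DE Q1).Nonempty := ⟨_, subset_convexHull ℝ _ hx⟩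
    exact this.ne_empty
  have hpd : polyDim (DE Q1) = (Module.finrank ℝ (vectorSpan ℝ (epsVec '' Q1)) : ℤ) := by
    rw [polyDim, if_neg hne, DE, affineSpan_convexHull, direction_affineSpan]
  have hsup := span_eq_sup _ _ hx
  rw [hpd]
  constructor
  · rintro ⟨ρ, hρ⟩
    let l : (V → ℝ) →ₗ[ℝ] ℝ := Fintype.linearCombination ℝ (fun v => - ρ v)
    have hl : ∀ x ∈ epsVec '' Q1, l x = 1 := by
      rintro _ ⟨e, he, rfl⟩
      have h2 := hρ e he
      rw [epsVec_eq_single, map_sub]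
      simp only [l, Fintype.linearCombination_apply_single, smul_eq_mul]
      linarith
    have hle := vectorSpan_le_ker _ l hl
    have hdisj : vectorSpan ℝ (epsVec '' Q1) ⊓ Submodule.span ℝ {epsVec e0} = ⊥ := by
      rw [eq_bot_iff]
      rintro y ⟨hy1, hy2⟩
      obtain ⟨c, rfl⟩ := Submodule.mem_span_singleton.1 hy2
      have h3 := hle hy1
      rw [LinearMap.mem_ker, map_smul, hl _ hx] at h3
      have : c = 0 := by simpa using h3
      simp [this]
    have hne0 : epsVec e0 ≠ 0 := by
      intro h0
      have := hl _ hx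
      rw [h0, map_zero] at this
      exact zero_ne_one this
    have h4 := Submodule.finrank_sup_add_finrank_inf_eq (vectorSpan ℝ (epsVec '' Q1))
      (Submodule.span ℝ {epsVec e0})
    rw [hdisj, ← hsup, finrank_bot, finrank_span_singleton hne0] at h4
    omega
  · intro hno
    have hmem : epsVec e0 ∈ vectorSpan ℝ (epsVec '' Q1) := by
      by_contra hnm
      obtain ⟨l, hl0, hl⟩ := Submodule.exists_le_ker_of_notMem hnm
      apply hno
      refine dual_eps Q1 ((l (epsVec e0))⁻¹ • l) fun e he => ?_
      have h5 : epsVec e - epsVec e0 ∈ vectorSpan ℝ (epsVec '' Q1) :=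
        vsub_mem_vectorSpan ℝ ⟨e, he, rfl⟩ hx
      have h6 := hl h5
      rw [LinearMap.mem_ker, map_sub, sub_eq_zero] at h6
      rw [LinearMap.smul_apply, h6, smul_eq_mul, inv_mul_cancel₀ hl0]
    have h7 : Submodule.span ℝ (epsVec '' Q1) = vectorSpan ℝ (epsVec '' Q1) := by
      rw [hsup, sup_eq_left, Submodule.span_le]
      simpa using hmem
    rw [h7] at hdim
    omega
end

section
/- Let Q be a finite quiver without loops and multiedges and let R be a lluf subquiver of Q with dim DE(R) = dim DE(Q) − 1. Then DE(R) is a facet of DE(Q) if and only if one of the following holds: (1) |π_0(R)| = |π_0(Q)| + 1, each connected component of R is a full subquiver of Q, and the contraction Q/R is acyclic; or (2) |π_0(R)| = |π_0(Q)| and there exists a rank function ρ of R such that (ρ(v)−ρ(w)+1)(ρ(v')−ρ(w')+1) > 0 for any (v,w),(v',w') ∈ Q_1 ∖ R_1. -/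
open scoped BigOperators

section Helpers

variable {V : Type*} [Fintype V] [DecidableEq V]

/-- The linear functional with potential `lam`. -/
noncomputable def potFun (lam : V → ℝ) : (V → ℝ) →ₗ[ℝ] ℝ :=
  ∑ u, lam u • LinearMap.proj u

lemma potFun_eps (lam : V → ℝ) (e : V × V) : potFun lam (epsVec e) = lam e.1 - lam e.2 := by
  simp [potFun, epsVec, LinearMap.sum_apply, mul_sub, Finset.sum_sub_distrib]

lemma exists_pot (l : (V → ℝ) →ₗ[ℝ] ℝ) : ∃ lam : V → ℝ, l = potFun lam := by
  refine ⟨fun u => l (Pi.single u 1), ?_⟩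
  ext u
  simp [potFun, LinearMap.sum_apply, Pi.single_apply]

lemma kernel_card (E : Set (V × V)) (K : Submodule ℝ (V → ℝ))
    (hK : ∀ lam, lam ∈ K ↔ ∀ e ∈ E, lam e.1 = lam e.2) :
    Module.finrank ℝ K = numComponents E := by
  classical
  have hc : ∀ lam ∈ K, ∀ a b, Relation.EqvGen (edgeRel E) a b → lam a = lam b := by
    intro lam hl a b h
    induction h with
    | rel x y h => exact (hK lam).1 hl (x, y) h
    | refl x => rfl
    | symm x y _ ih => exact ih.symm
    | trans x y z _ _ ih1 ih2 => exact ih1.trans ih2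
  let f : (Quot (Relation.EqvGen (edgeRel E)) → ℝ) ≃ₗ[ℝ] K :=
    { toFun := fun g => ⟨fun v => g (Quot.mk _ v), (hK _).2 (fun e he => by
        congr 1
        exact Quot.sound (Relation.EqvGen.rel _ _ he))⟩
      map_add' := fun _ _ => rfl
      map_smul' := fun _ _ => rfl
      invFun := fun k => Quot.lift k.1 (hc k.1 k.2)
      left_inv := fun g => by
        funext q
        induction q using Quot.ind
        rfl
      right_inv := fun k => rfl }
  have : Finite (Quot (Relation.EqvGen (edgeRel E))) := Quot.finite _
  have := Fintype.ofFinite (Quot (Relation.EqvGen (edgeRel E)))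
  rw [← f.finrank_eq, Module.finrank_fintype_fun_eq_card, numComponents, Nat.card_eq_fintype_card]

lemma span_card (E : Set (V × V)) :
    Module.finrank ℝ (Submodule.span ℝ (epsVec '' E)) + numComponents E = Fintype.card V := by
  classical
  have := Fintype.ofFinite E
  let M : Matrix E V ℝ := fun e => epsVec e.1
  have h1 : M.rank = Module.finrank ℝ (Submodule.span ℝ (epsVec '' E)) := by
    rw [Matrix.rank_eq_finrank_span_row]
    have hrow : Set.range M.row = epsVec '' E := by
      rw [Set.image_eq_range]
      rfl
    rw [hrow]
  have h2 := LinearMap.finrank_range_add_finrank_ker M.mulVecLin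
  rw [Module.finrank_fintype_fun_eq_card] at h2
  rw [← h2, ← h1, Matrix.rank]
  congr 1
  symm
  apply kernel_card
  intro lam
  have key : ∀ e : E, M.mulVec lam e = lam e.1.1 - lam e.1.2 := by
    intro e
    rw [← potFun_eps]
    simp [Matrix.mulVec, dotProduct, M, potFun, LinearMap.sum_apply, mul_comm]
  rw [LinearMap.mem_ker, Matrix.mulVecLin_apply]
  constructor
  · intro h e he
    have := key ⟨e, he⟩
    rw [h] at this
    simp at this
    linarith
  · intro h
    funext e
    rw [key e, h e.1 e.2]
    simp

open Classical in
lemma polyDim_DE (E : Set (V × V)) :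
    polyDim (DE E) = (Fintype.card V : ℤ) - numComponents E - (if HasRankFn E then 1 else 0) := by
  have hs := span_card E
  rcases E.eq_empty_or_nonempty with rfl | ⟨e0, he0⟩
  · have : HasRankFn (∅ : Set (V × V)) := ⟨0, by simp⟩
    rw [Set.image_empty, Submodule.span_empty, finrank_bot] at hs
    have hd : polyDim (DE (∅ : Set (V × V))) = -1 := by simp [polyDim, DE]
    rw [hd, if_pos this]
    omega
  · have hne : DE E ≠ ∅ := by
      apply Set.Nonempty.ne_empty
      exact ⟨_, subset_convexHull ℝ _ ⟨e0, he0, rfl⟩⟩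
    set x : V → ℝ := epsVec e0 with hx
    have hD : (affineSpan ℝ (DE E)).direction = Submodule.span ℝ ((· - x) '' (epsVec '' E)) := by
      rw [DE, affineSpan_convexHull, direction_affineSpan,
        vectorSpan_eq_span_vsub_set_right ℝ (show x ∈ epsVec '' E from ⟨e0, he0, rfl⟩)]
      rfl
    set D := Submodule.span ℝ ((· - x) '' (epsVec '' E)) with hDd
    set S := Submodule.span ℝ (epsVec '' E) with hS
    have hDm : ∀ e ∈ E, epsVec e - x ∈ D := fun e he =>
      Submodule.subset_span ⟨_, ⟨e, he, rfl⟩, rfl⟩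
    have hxS : x ∈ S := Submodule.subset_span ⟨e0, he0, rfl⟩
    have hSm : ∀ e ∈ E, epsVec e ∈ S := fun e he => Submodule.subset_span ⟨e, he, rfl⟩
    have hDS : D ≤ S := by
      rw [hDd, Submodule.span_le]
      rintro _ ⟨_, ⟨e, he, rfl⟩, rfl⟩
      exact S.sub_mem (hSm e he) hxS
    have hsup : D ⊔ Submodule.span ℝ {x} = S := by
      apply le_antisymm
      · apply sup_le hDS
        rw [Submodule.span_singleton_le_iff_mem]
        exact hxS
      · rw [hS, Submodule.span_le]
        rintro _ ⟨e, he, rfl⟩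
        have := Submodule.add_mem_sup (hDm e he) (Submodule.mem_span_singleton_self (R := ℝ) x)
        simpa using this
    rw [polyDim, if_neg hne, hD]
    by_cases hr : HasRankFn E
    · have hxD : x ∉ D := by
        obtain ⟨ρ, hρ⟩ := hr
        intro hmem
        have hle : D ≤ LinearMap.ker (potFun ρ) := by
          rw [hDd, Submodule.span_le]
          rintro _ ⟨_, ⟨e, he, rfl⟩, rfl⟩
          have h1 := hρ e he
          have h2 := hρ e0 he0
          simp only [SetLike.mem_coe, LinearMap.mem_ker, map_sub, hx, potFun_eps]
          linarith
        have h3 := hle hmem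
        have h2 := hρ e0 he0
        rw [LinearMap.mem_ker, hx, potFun_eps] at h3
        linarith
      have hx0 : x ≠ 0 := fun h => hxD (h ▸ D.zero_mem)
      have hinf : D ⊓ Submodule.span ℝ {x} = ⊥ := by
        rw [← disjoint_iff, Submodule.disjoint_span_singleton' hx0]
        exact hxD
      have h4 := Submodule.finrank_sup_add_finrank_inf_eq D (Submodule.span ℝ {x})
      rw [hsup, hinf, finrank_bot, finrank_span_singleton hx0] at h4
      simp only [hr, if_true]
      omega
    · have hxD : x ∈ D := by
        by_contra hxD
        apply hr
        obtain ⟨l, hl, hl'⟩ := Submodule.exists_le_ker_of_notMem hxD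
        obtain ⟨lam, rfl⟩ := exists_pot l
        rw [hx, potFun_eps] at hl
        refine ⟨fun v => - lam v / (lam e0.1 - lam e0.2), fun e he => ?_⟩
        have h5 := hl' (hDm e he)
        rw [LinearMap.mem_ker, map_sub, hx, potFun_eps, potFun_eps] at h5
        simp only
        field_simp
        linarith
      have : D = S := by
        rw [← hsup, left_eq_sup, Submodule.span_singleton_le_iff_mem]
        exact hxD
      rw [this]
      simp only [hr, if_false]
      omega

lemma face_of (Q1 R1 : Set (V × V)) (hsub : R1 ⊆ Q1) (lam : V → ℝ) (c : ℝ)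
    (h1 : ∀ e ∈ R1, lam e.1 - lam e.2 = c) (h2 : ∀ e ∈ Q1 \ R1, lam e.1 - lam e.2 < c) :
    IsFaceOf (DE R1) (DE Q1) := by
  right
  have hR : ∀ x ∈ DE R1, potFun lam x = c := by
    have : DE R1 ⊆ {x | potFun lam x = c} := by
      apply convexHull_min
      · rintro _ ⟨e, he, rfl⟩
        simpa [potFun_eps] using h1 e he
      · exact convex_hyperplane (potFun lam).isLinear c
    exact this
  have hB : ∀ x ∈ DE (Q1 \ R1), potFun lam x < c := by
    have : DE (Q1 \ R1) ⊆ {x | potFun lam x < c} := by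
      apply convexHull_min
      · rintro _ ⟨e, he, rfl⟩
        simpa [potFun_eps] using h2 e he
      · exact convex_halfSpace_lt (potFun lam).isLinear c
    exact this
  have hQ : ∀ x ∈ DE Q1, potFun lam x ≤ c := by
    have : DE Q1 ⊆ {x | potFun lam x ≤ c} := by
      apply convexHull_min
      · rintro _ ⟨e, he, rfl⟩
        by_cases hr : e ∈ R1
        · simpa [potFun_eps] using (h1 e hr).le
        · simpa [potFun_eps] using (h2 e ⟨he, hr⟩).le
      · exact convex_halfSpace_le (potFun lam).isLinear c
    exact this
  refine ⟨potFun lam, c, hQ, ?_⟩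
  apply Set.Subset.antisymm
  · intro x hx
    exact ⟨convexHull_mono (Set.image_mono hsub) hx, hR x hx⟩
  · rintro x ⟨hx, hxc⟩
    rcases R1.eq_empty_or_nonempty with hRe | hRn
    · subst hRe
      rw [Set.sdiff_empty] at hB
      exact absurd hxc (hB x hx).ne
    rcases (Q1 \ R1).eq_empty_or_nonempty with hBe | hBn
    · have : Q1 = R1 := Set.Subset.antisymm (Set.sdiff_eq_empty.1 hBe) hsub
      rwa [this] at hx
    have hu : Q1 = R1 ∪ (Q1 \ R1) := (Set.union_sdiff_cancel hsub).symm
    rw [DE, hu, Set.image_union, convexHull_union (hRn.image _) (hBn.image _),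
      mem_convexJoin] at hx
    obtain ⟨y, hy, z, hz, a, b, ha, hb, hab, rfl⟩ := hx
    have h3 := hR y hy
    have h4 := hB z hz
    rw [map_add, map_smul, map_smul, smul_eq_mul, smul_eq_mul, h3] at hxc
    have hb0 : b = 0 := by
      by_contra hne
      have hbp : 0 < b := lt_of_le_of_ne hb (Ne.symm hne)
      have ha' : a = 1 - b := by linarith
      subst ha'
      nlinarith
    have ha1 : a = 1 := by linarith
    subst hb0 ha1
    rw [one_smul, zero_smul, add_zero]
    exact hy

lemma eps_not_mem (R1 : Set (V × V)) (hloop : ∀ v : V, (v, v) ∉ R1) (e : V × V)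
    (hne : e.1 ≠ e.2) (he : e ∉ R1) : epsVec e ∉ DE R1 := by
  let g : V → ℝ := epsVec e
  have key : DE R1 ⊆ {x | potFun g x < 2} := by
    apply convexHull_min
    · rintro _ ⟨f, hf, rfl⟩
      have hfl : f.1 ≠ f.2 := fun h => hloop f.1 (by
        have : (f.1, f.1) = f := Prod.ext rfl h
        rwa [this])
      have hfe : ¬ (f.1 = e.1 ∧ f.2 = e.2) := fun h => he (by
        have : e = f := Prod.ext h.1.symm h.2.symm
        rwa [this])
      simp only [Set.mem_ofPred_eq, potFun_eps, g, epsVec]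
      split_ifs <;> first | (norm_num; done) | (exfalso; grind)
    · exact convex_halfSpace_lt (potFun g).isLinear 2
  intro h
  have h2 := key h
  simp only [Set.mem_ofPred_eq, potFun_eps, g, epsVec] at h2
  simp [hne, hne.symm] at h2
  norm_num at h2

lemma of_face (Q1 R1 : Set (V × V)) (hloop : ∀ v : V, (v, v) ∉ Q1) (hsub : R1 ⊆ Q1)
    (l : (V → ℝ) →ₗ[ℝ] ℝ) (c : ℝ) (hl : ∀ x ∈ DE Q1, l x ≤ c)
    (hF : DE R1 = {x ∈ DE Q1 | l x = c}) :
    ∃ lam : V → ℝ, (∀ e ∈ R1, lam e.1 - lam e.2 = c) ∧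
      ∀ e ∈ Q1 \ R1, lam e.1 - lam e.2 < c := by
  obtain ⟨lam, rfl⟩ := exists_pot l
  refine ⟨lam, fun e he => ?_, fun e he => ?_⟩
  · have : epsVec e ∈ DE R1 := subset_convexHull ℝ _ ⟨e, he, rfl⟩
    rw [hF] at this
    rw [← potFun_eps]
    exact this.2
  · have hm : epsVec e ∈ DE Q1 := subset_convexHull ℝ _ ⟨e, he.1, rfl⟩
    rw [← potFun_eps]
    refine lt_of_le_of_ne (hl _ hm) fun heq => ?_
    refine eps_not_mem R1 (fun v hv => hloop v (hsub hv)) e (fun h => hloop e.1 ?_) he.2 ?_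
    · have : (e.1, e.1) = e := Prod.ext rfl h
      rw [this]
      exact he.1
    · rw [hF]
      exact ⟨hm, heq⟩

lemma const_of_eqv {W : Type*} (E : Set (W × W)) (lam : W → ℝ)
    (h : ∀ e ∈ E, lam e.1 = lam e.2) (a b : W)
    (hab : Relation.EqvGen (edgeRel E) a b) : lam a = lam b := by
  induction hab with
  | rel x y hxy => exact h (x, y) hxy
  | refl x => rfl
  | symm x y _ ih => exact ih.symm
  | trans x y z _ _ ih1 ih2 => exact ih1.trans ih2

lemma walk_of_transGen {α : Type*} (E : Set (α × α)) (a b : α)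
    (h : Relation.TransGen (edgeRel E) a b) :
    ∃ (n : ℕ) (v : ℕ → α), 1 ≤ n ∧ v 0 = a ∧ v n = b ∧ ∀ i < n, (v i, v (i + 1)) ∈ E := by
  induction h with
  | @single b h =>
    refine ⟨1, fun i => if i = 0 then a else b, le_rfl, by simp, by simp, ?_⟩
    intro i hi
    obtain rfl : i = 0 := by omega
    simp only [if_true, zero_add, one_ne_zero, if_false]
    exact h
  | @tail b d _ h ih =>
    obtain ⟨n, v, hn, h0, hb, hv⟩ := ih
    refine ⟨n + 1, fun i => if i ≤ n then v i else d, by omega, by simpa using h0, by simp, ?_⟩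
    intro i hi
    rcases Nat.lt_or_ge i n with hlt | hge
    · have h1 : i ≤ n := by omega
      have h2 : i + 1 ≤ n := by omega
      simpa [h1, h2] using hv i hlt
    · obtain rfl : i = n := by omega
      simp [hb]
      exact h

lemma exists_potential {α : Type*} [Finite α] (E : Set (α × α)) (hl : ∀ a, (a, a) ∉ E)
    (hac : IsAcyclicQ E) : ∃ f : α → ℝ, ∀ a b, (a, b) ∈ E → f a < f b := by
  have hirr : ∀ a, ¬ Relation.TransGen (edgeRel E) a a := by
    intro a h
    obtain ⟨n, v, hn, h0, hb, hv⟩ := walk_of_transGen E a a h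
    by_cases h1 : n = 1
    · subst h1
      have := hv 0 (by omega)
      rw [h0, hb] at this
      exact hl a this
    · apply hac
      refine ⟨n, fun i => v i, by omega, by simp [h0, hb], fun i => ?_⟩
      simpa using hv i i.2
  refine ⟨fun a => (Set.ncard {b | Relation.TransGen (edgeRel E) b a} : ℝ), fun a b hab => ?_⟩
  have hlt : Set.ncard {x | Relation.TransGen (edgeRel E) x a}
      < Set.ncard {x | Relation.TransGen (edgeRel E) x b} := by
    apply Set.ncard_lt_ncard _ (Set.toFinite _)
    refine Set.ssubset_iff_of_subset (fun x hx => hx.tail hab) |>.2 ⟨a, ?_, hirr a⟩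
    exact Relation.TransGen.single hab
  exact Nat.cast_lt.2 hlt

lemma cond_of_pot {W : Type*} (Q1 R1 : Set (W × W)) (mu : W → ℝ)
    (h1 : ∀ e ∈ R1, mu e.1 = mu e.2) (h2 : ∀ e ∈ Q1 \ R1, mu e.1 < mu e.2) :
    ComponentsFull Q1 R1 ∧ IsAcyclicQ (contraction Q1 R1) := by
  have hc := const_of_eqv R1 mu h1
  constructor
  · intro v w hvw hQ
    by_contra hR
    exact (h2 (v, w) ⟨hQ, hR⟩).ne (hc v w hvw)
  · rintro ⟨n, v, hn, h0, hv⟩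
    let g : Quot (Relation.EqvGen (edgeRel R1)) → ℝ := Quot.lift mu hc
    have hm : StrictMono (fun i => g (v i)) := by
      rw [Fin.strictMono_iff_lt_succ]
      intro i
      obtain ⟨e, he, hp⟩ := hv i
      rw [Prod.mk.injEq] at hp
      simp only [hp.1, hp.2]
      exact h2 e he
    have hlt : (0 : Fin (n + 1)) < Fin.last n := by
      rw [Fin.lt_def]
      simp
      omega
    have := hm hlt
    simp only [h0] at this
    exact lt_irrefl _ this

end Helpers

/-- Theorem 2 (characterization of facets of the directed edge polytope). -/
theorem facet_characterization {V : Type*} [Fintype V] [DecidableEq V]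
    (Q1 R1 : Set (V × V)) (hloop : ∀ v : V, (v, v) ∉ Q1) (hsub : R1 ⊆ Q1)
    (hdim : polyDim (DE R1) = polyDim (DE Q1) - 1) :
    IsFacetOf (DE R1) (DE Q1) ↔
      ((numComponents R1 = numComponents Q1 + 1 ∧ ComponentsFull Q1 R1 ∧
          IsAcyclicQ (contraction Q1 R1)) ∨
        (numComponents R1 = numComponents Q1 ∧
          ∃ ρ : V → ℝ, (∀ e ∈ R1, ρ e.1 + 1 = ρ e.2) ∧
            ∀ e ∈ Q1 \ R1, ∀ e' ∈ Q1 \ R1,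
              0 < (ρ e.1 - ρ e.2 + 1) * (ρ e'.1 - ρ e'.2 + 1))) := by
  classical
  constructor
  · rintro ⟨hface, -⟩
    have hne : DE R1 ≠ DE Q1 := fun h => by
      rw [h] at hdim
      omega
    rcases hface with h | ⟨l, c, hl, hF⟩
    · exact absurd h hne
    obtain ⟨lam, h1, h2⟩ := of_face Q1 R1 hloop hsub l c hl hF
    have hpos : HasRankFn Q1 → HasRankFn R1 := fun ⟨ρ, hρ⟩ => ⟨ρ, fun e he => hρ e (hsub he)⟩
    have hcases : numComponents R1 = numComponents Q1 ∨
        (numComponents R1 = numComponents Q1 + 1 ∧ (HasRankFn R1 → HasRankFn Q1)) := by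
      rw [polyDim_DE, polyDim_DE] at hdim
      by_cases hr : HasRankFn R1 <;> by_cases hq : HasRankFn Q1 <;>
        simp only [hr, hq, if_true, if_false] at hdim ⊢
      · right
        exact ⟨by omega, fun h => h⟩
      · left
        omega
      · exact absurd (hpos hq) hr
      · right
        exact ⟨by omega, fun h => h⟩
    rcases hcases with hp | ⟨hp, hrank⟩
    · right
      refine ⟨hp, ?_⟩
      have hc : c ≠ 0 := by
        rintro rfl
        -- functions constant along `R1` are constant along `Q1`
        let K : Set (V × V) → Submodule ℝ (V → ℝ) := fun E =>
          { carrier := {m | ∀ e ∈ E, m e.1 = m e.2}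
            add_mem' := fun {a b} ha hb e he => by
              simp only [Pi.add_apply, ha e he, hb e he]
            zero_mem' := fun e he => rfl
            smul_mem' := fun r a ha e he => by
              simp only [Pi.smul_apply, ha e he] }
        have hR := kernel_card R1 (K R1) (fun _ => Iff.rfl)
        have hQ := kernel_card Q1 (K Q1) (fun _ => Iff.rfl)
        have hle : K Q1 ≤ K R1 := fun m hm e he => hm e (hsub he)
        have heq : K Q1 = K R1 := Submodule.eq_of_le_of_finrank_eq hle (by rw [hR, hQ, hp])
        have hmem : lam ∈ K Q1 := by
          rw [heq]
          intro e he
          linarith [h1 e he]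
        apply hne
        congr 1
        apply Set.Subset.antisymm hsub
        intro e he
        by_contra her
        have h3 := h2 e ⟨he, her⟩
        have h4 : lam e.1 = lam e.2 := hmem e he
        linarith
      refine ⟨fun v => - lam v / c, fun e he => ?_, fun e he e' he' => ?_⟩
      · have := h1 e he
        simp only
        field_simp
        linarith
      · have ha := h2 e he
        have hb := h2 e' he'
        have : (-lam e.1 / c - -lam e.2 / c + 1) * (-lam e'.1 / c - -lam e'.2 / c + 1)
            = ((c - (lam e.1 - lam e.2)) * (c - (lam e'.1 - lam e'.2))) / c ^ 2 := by
          field_simp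
          ring
        simp only [this]
        apply div_pos (mul_pos (by linarith) (by linarith))
        positivity
    · left
      refine ⟨hp, ?_⟩
      by_cases hc : c = 0
      · subst hc
        exact cond_of_pot Q1 R1 lam (fun e he => by linarith [h1 e he])
          (fun e he => by linarith [h2 e he])
      · have hR : HasRankFn R1 := by
          refine ⟨fun v => - lam v / c, fun e he => ?_⟩
          have := h1 e he
          simp only
          field_simp
          linarith
        obtain ⟨σ, hσ⟩ := hrank hR
        refine cond_of_pot Q1 R1 (fun v => lam v + c * σ v) (fun e he => ?_) (fun e he => ?_)
        · have h3 := h1 e he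
          have h4 := hσ e (hsub he)
          simp only [← h4]
          linarith
        · have h3 := h2 e he
          have h4 := hσ e he.1
          simp only [← h4]
          linarith
  · intro h
    refine ⟨?_, hdim⟩
    rcases h with ⟨-, hfull, hac⟩ | ⟨-, ρ, h1, h2⟩
    · have hlp : ∀ a, (a, a) ∉ contraction Q1 R1 := by
        rintro a ⟨e, he, hp⟩
        rw [Prod.mk.injEq] at hp
        have h3 := Quot.eqvGen_exact (hp.1.symm.trans hp.2)
        rw [Equivalence.eqvGen_eq (Relation.EqvGen.is_equivalence _)] at h3
        exact he.2 (hfull e.1 e.2 h3 he.1)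
      have : Finite (Quot (Relation.EqvGen (edgeRel R1))) := Quot.finite _
      obtain ⟨f, hf⟩ := exists_potential _ hlp hac
      refine face_of Q1 R1 hsub (fun v => f (Quot.mk _ v)) 0 (fun e he => ?_) (fun e he => ?_)
      · have : Quot.mk (Relation.EqvGen (edgeRel R1)) e.1 = Quot.mk _ e.2 :=
          Quot.sound (Relation.EqvGen.rel _ _ he)
        simp only [this, sub_self]
      · have := hf _ _ ⟨e, he, rfl⟩
        linarith
    · by_cases hB : ∃ e0 ∈ Q1 \ R1, 0 < ρ e0.1 - ρ e0.2 + 1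
      · obtain ⟨e0, he0, hp⟩ := hB
        refine face_of Q1 R1 hsub (fun v => - ρ v) 1 (fun e he => ?_) (fun e he => ?_)
        · linarith [h1 e he]
        · have h5 : 0 < ρ e.1 - ρ e.2 + 1 := by
            by_contra hcon
            nlinarith [h2 e he e0 he0]
          linarith
      · push Not at hB
        refine face_of Q1 R1 hsub (fun v => ρ v) (-1) (fun e he => ?_) (fun e he => ?_)
        · linarith [h1 e he]
        · have h3 := hB e he
          have h4 := h2 e he e he
          have h5 : ρ e.1 - ρ e.2 + 1 ≠ 0 := by
            intro h0
            rw [h0] at h4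
            simp at h4
          have := lt_of_le_of_ne h3 h5
          linarith
end

section
/- Let Q be a finite quiver without loops and multiedges admitting a rank function. For a proper subquiver R of Q, the polytope DE(R) is a face of DE(Q) if and only if each connected component of R is a full subquiver of Q and the contraction Q/R is acyclic. -/
open scoped BigOperators

lemma fc_lin_eps {V : Type*} [Fintype V] [DecidableEq V] (l : (V → ℝ) →ₗ[ℝ] ℝ) (e : V × V) :
    l (epsVec e) = l (Pi.single e.1 1) - l (Pi.single e.2 1) := by
  rw [← map_sub]
  congr 1
  funext u
  simp [epsVec, Pi.single_apply]

/-- The linear functional with prescribed values on the standard basis. -/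
noncomputable def fcFun {V : Type*} [Fintype V] (g : V → ℝ) : (V → ℝ) →ₗ[ℝ] ℝ :=
  ∑ u, g u • LinearMap.proj u

lemma fcFun_eps {V : Type*} [Fintype V] [DecidableEq V] (g : V → ℝ) (e : V × V) :
    fcFun g (epsVec e) = g e.1 - g e.2 := by
  simp [fcFun, epsVec, mul_sub, Finset.sum_sub_distrib]

lemma fc_mem_of_eps_mem {V : Type*} [Fintype V] [DecidableEq V] (R : Set (V × V)) (e : V × V)
    (he : e.1 ≠ e.2) (h : epsVec e ∈ DE R) : e ∈ R := by
  by_contra hne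
  let g : V → ℝ := fun u => (if u = e.1 then 1 else 0) - (if u = e.2 then 1 else 0)
  have hsub : DE R ⊆ {x | fcFun g x ≤ 1} := by
    refine convexHull_min ?_ (convex_halfSpace_le (fcFun g).isLinear 1)
    rintro _ ⟨f, hf, rfl⟩
    have hfe : f ≠ e := fun h => hne (h ▸ hf)
    have : ¬ (f.1 = e.1 ∧ f.2 = e.2) := fun h => hfe (Prod.ext h.1 h.2)
    simp only [Set.mem_setOf_eq, fcFun_eps, g]
    split_ifs <;> first | (norm_num; done) | (exfalso; simp_all)
  have := hsub h
  simp only [Set.mem_setOf_eq, fcFun_eps, g] at this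
  simp [he, he.symm] at this
  norm_num at this

lemma fc_walk {α : Type*} {r : α → α → Prop} {a b : α} (h : Relation.TransGen r a b) :
    ∃ (n : ℕ) (f : ℕ → α), 0 < n ∧ f 0 = a ∧ f n = b ∧ ∀ i < n, r (f i) (f (i + 1)) := by
  induction h with
  | single h =>
    rename_i b
    exact ⟨1, fun i => if i = 0 then a else b, by simp, by simp, by simp, by
      intro i hi
      obtain rfl : i = 0 := by omega
      simpa using h⟩
  | tail _ h ih =>
    rename_i b c _
    obtain ⟨n, f, hn, h0, hb, hf⟩ := ih
    refine ⟨n + 1, fun i => if i ≤ n then f i else c, by simp, by simpa using h0, by simp, ?_⟩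
    intro i hi
    rcases Nat.lt_succ_iff_lt_or_eq.mp hi with h1 | h1
    · have h2 : i ≤ n := h1.le
      have h3 : i + 1 ≤ n := h1
      simpa [h2, h3] using hf i h1
    · subst h1
      simpa [hb] using h

lemma fc_irrefl {α : Type*} {E : Set (α × α)} (h : IsAcyclicQ E) (a : α) :
    ¬ Relation.TransGen (edgeRel E) a a := by
  intro ht
  obtain ⟨n, f, hn, h0, hb, hf⟩ := fc_walk ht
  apply h
  rcases Nat.lt_or_ge 1 n with h1 | h1
  · exact ⟨n, fun i => f i, h1, by simp [h0, hb], fun i => by simpa [edgeRel] using hf i i.2⟩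
  · obtain rfl : n = 1 := by omega
    refine ⟨2, fun _ => a, by norm_num, rfl, fun i => ?_⟩
    have := hf 0 (by norm_num)
    rw [h0] at this
    simpa [edgeRel, hb] using this

lemma fc_height {α : Type*} [Finite α] {E : Set (α × α)} (h : IsAcyclicQ E) :
    ∃ g : α → ℝ, ∀ e ∈ E, g e.1 < g e.2 := by
  refine ⟨fun a => (Set.ncard {y | Relation.TransGen (edgeRel E) y a} : ℝ), fun e he => ?_⟩
  have hedge0 : edgeRel E e.1 e.2 := he
  apply Nat.cast_lt.mpr
  apply Set.ncard_lt_ncard _ (Set.toFinite _)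
  refine ⟨fun y hy => Relation.TransGen.tail hy hedge0, fun hsub => ?_⟩
  exact fc_irrefl h e.1 (hsub (Relation.TransGen.single hedge0))

/-- Theorem 3 (characterization of faces when `Q` has a rank function). -/
theorem face_characterization {V : Type*} [Fintype V] [DecidableEq V]
    (Q1 R1 : Set (V × V)) (hloop : ∀ v : V, (v, v) ∉ Q1)
    (hrank : HasRankFn Q1) (hproper : R1 ⊂ Q1) :
    IsFaceOf (DE R1) (DE Q1) ↔
      (ComponentsFull Q1 R1 ∧ IsAcyclicQ (contraction Q1 R1)) := by
  have hne : ∀ e ∈ Q1, e.1 ≠ e.2 := by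
    rintro ⟨v, w⟩ he h
    obtain rfl : v = w := h
    exact hloop v he
  constructor
  · rintro (heq | ⟨l, c, hle, heq⟩)
    · exfalso
      apply hproper.2
      intro e he
      apply fc_mem_of_eps_mem R1 e (hne e he)
      rw [heq]
      exact subset_convexHull ℝ _ ⟨e, he, rfl⟩
    · obtain ⟨ρ, hρ⟩ := hrank
      let g : V → ℝ := fun v => l (Pi.single v 1) + c * ρ v
      have hg : ∀ e ∈ Q1, g e.1 - g e.2 = l (epsVec e) - c := by
        intro e he
        simp only [g]
        rw [fc_lin_eps, ← hρ e he]
        ring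
      have hR : ∀ e ∈ R1, g e.1 = g e.2 := by
        intro e he
        have h1 : epsVec e ∈ DE R1 := subset_convexHull ℝ _ ⟨e, he, rfl⟩
        rw [heq] at h1
        have := hg e (hproper.1 he)
        linarith [h1.2]
      have hQ : ∀ e ∈ Q1, e ∉ R1 → g e.1 < g e.2 := by
        intro e he hn
        have h1 : epsVec e ∈ DE Q1 := subset_convexHull ℝ _ ⟨e, he, rfl⟩
        have h2 := hle _ h1
        have h3 : l (epsVec e) ≠ c := by
          intro h3
          apply hn
          apply fc_mem_of_eps_mem R1 e (hne e he)
          rw [heq]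
          exact ⟨h1, h3⟩
        have := hg e he
        have := lt_of_le_of_ne h2 h3
        linarith
      have hE : ∀ v w, Relation.EqvGen (edgeRel R1) v w → g v = g w := by
        intro v w h
        induction h with
        | rel x y h => exact hR (x, y) h
        | refl x => rfl
        | symm x y _ ih => exact ih.symm
        | trans x y z _ _ h1 h2 => exact h1.trans h2
      refine ⟨?_, ?_⟩
      · intro v w h hq
        by_contra hn
        exact (hQ (v, w) hq hn).ne (hE v w h)
      · rintro ⟨n, v, hn, hv, hedge⟩
        let G : Quot (Relation.EqvGen (edgeRel R1)) → ℝ := Quot.lift g hE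
        have hm : StrictMono (fun i => G (v i)) := by
          rw [Fin.strictMono_iff_lt_succ]
          intro i
          obtain ⟨e, he, hp⟩ := hedge i
          have h1 := congrArg Prod.fst hp
          have h2 := congrArg Prod.snd hp
          simp only at h1 h2
          rw [h1, h2]
          exact hQ e he.1 he.2
        have h0 : (0 : Fin (n + 1)) < Fin.last n := by
          rw [Fin.lt_def]
          simp
          omega
        have := hm h0
        simp only [hv] at this
        exact lt_irrefl _ this
  · rintro ⟨hfull, hac⟩
    obtain ⟨G, hG⟩ := fc_height hac
    right
    let g : V → ℝ := fun v => G (Quot.mk _ v)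
    let l := fcFun g
    have hR : ∀ x ∈ DE R1, l x = 0 := by
      have : DE R1 ⊆ {x | l x = 0} := by
        refine convexHull_min ?_ (convex_hyperplane l.isLinear 0)
        rintro _ ⟨e, he, rfl⟩
        have : Quot.mk (Relation.EqvGen (edgeRel R1)) e.1 = Quot.mk _ e.2 :=
          Quot.sound (Relation.EqvGen.rel _ _ he)
        simp [l, fcFun_eps, g, this]
      exact this
    have hC : DE Q1 ⊆ {x | l x ≤ 0 ∧ (l x = 0 → x ∈ DE R1)} := by
      refine convexHull_min ?_ ?_
      · rintro _ ⟨e, he, rfl⟩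
        by_cases hr : e ∈ R1
        · have h1 : epsVec e ∈ DE R1 := subset_convexHull ℝ _ ⟨e, hr, rfl⟩
          exact ⟨(hR _ h1).le, fun _ => h1⟩
        · have h1 : l (epsVec e) < 0 := by
            have := hG _ ⟨e, ⟨he, hr⟩, rfl⟩
            simp only [l, fcFun_eps, g]
            linarith
          exact ⟨h1.le, fun h => absurd h h1.ne⟩
      · rintro x ⟨hx, hx'⟩ y ⟨hy, hy'⟩ a b ha hb hab
        have hl : l (a • x + b • y) = a * l x + b * l y := by simp
        have h1 := mul_nonpos_of_nonneg_of_nonpos ha hx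
        have h2 := mul_nonpos_of_nonneg_of_nonpos hb hy
        refine ⟨by rw [hl]; linarith, fun h0 => ?_⟩
        rw [hl] at h0
        have h3 : a * l x = 0 := by linarith
        have h4 : b * l y = 0 := by linarith
        rcases mul_eq_zero.mp h3 with h3 | h3
        · subst h3
          obtain rfl : b = 1 := by linarith
          have : l y = 0 := by linarith
          simpa using hy' this
        · rcases mul_eq_zero.mp h4 with h4 | h4
          · subst h4
            obtain rfl : a = 1 := by linarith
            simpa using hx' (by linarith)
          · exact convex_convexHull ℝ _ (hx' h3) (hy' h4) ha hb hab
    refine ⟨l, 0, fun x hx => (hC hx).1, ?_⟩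
    apply Set.Subset.antisymm
    · exact fun x hx => ⟨convexHull_mono (Set.image_mono hproper.1) hx, hR x hx⟩
    · exact fun x hx => (hC hx.1).2 hx.2
end

section
/- If a finite quiver Q without loops and multiedges does not admit a rank function, then dim DE(Q) ≥ |Q_0| − |π_0(Q)|. -/
open scoped BigOperators

/-- If `Q` has no rank function, then `dim DE(Q) ≥ |Q_0| - |π_0(Q)|`. -/
theorem dim_ge_of_no_rank_function {V : Type*} [Fintype V] [DecidableEq V]
    (Q1 : Set (V × V)) (hloop : ∀ v : V, (v, v) ∉ Q1) (hrank : ¬ HasRankFn Q1) :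
    (Fintype.card V : ℤ) - (numComponents Q1 : ℤ) ≤ polyDim (DE Q1) := by
  classical
  have hne : Q1.Nonempty := by
    by_contra h
    rw [Set.not_nonempty_iff_eq_empty] at h
    exact hrank ⟨fun _ => 0, by simp [h]⟩
  obtain ⟨e0, he0⟩ := hne
  have hDE : DE Q1 ≠ ∅ := by
    have : epsVec e0 ∈ DE Q1 := subset_convexHull ℝ _ ⟨e0, he0, rfl⟩
    exact Set.Nonempty.ne_empty ⟨_, this⟩
  have hmem : ∀ e ∈ Q1, epsVec e - epsVec e0 ∈ (affineSpan ℝ (DE Q1)).direction := by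
    intro e he
    rw [direction_affineSpan]
    exact vsub_mem_vectorSpan ℝ (subset_convexHull ℝ _ ⟨e, he, rfl⟩)
      (subset_convexHull ℝ _ ⟨e0, he0, rfl⟩)
  have heps : ∀ e : V × V, epsVec e = Pi.single e.1 (1 : ℝ) - Pi.single e.2 (1 : ℝ) := by
    intro e
    funext u
    simp [epsVec, Pi.single_apply]
  unfold polyDim
  rw [if_neg hDE]
  set D := (affineSpan ℝ (DE Q1)).direction with hD
  let C := Quot (Relation.EqvGen (edgeRel Q1))
  have : Finite C := Quot.finite _
  have : Fintype C := Fintype.ofFinite C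
  let T : (C → ℝ) →ₗ[ℝ] Module.Dual ℝ (V → ℝ) :=
    ((Pi.basisFun ℝ V).constr ℝ : (V → ℝ) ≃ₗ[ℝ] ((V → ℝ) →ₗ[ℝ] ℝ)).toLinearMap ∘ₗ
      LinearMap.funLeft ℝ ℝ (Quot.mk _)
  have hsub : D.dualAnnihilator ≤ LinearMap.range T := by
    intro f hf
    rw [Submodule.mem_dualAnnihilator] at hf
    have hc : ∀ e ∈ Q1, f (epsVec e) = f (epsVec e0) := by
      intro e he
      have := hf _ (hmem e he)
      rw [map_sub] at this
      linarith
    have h0 : f (epsVec e0) = 0 := by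
      by_contra hc0
      apply hrank
      refine ⟨fun v => - f (Pi.single v 1) / f (epsVec e0), fun e he => ?_⟩
      have h1 := hc e he
      rw [heps e, map_sub] at h1
      field_simp
      linarith
    have hedge : ∀ a b, Relation.EqvGen (edgeRel Q1) a b →
        f (Pi.single a 1) = f (Pi.single b 1) := by
      intro a b h
      induction h with
      | rel a b h =>
        have h1 := hc (a, b) h
        rw [heps, map_sub, h0] at h1
        simp only at h1
        linarith
      | refl a => rfl
      | symm a b _ ih => exact ih.symm
      | trans a b c _ _ ih1 ih2 => exact ih1.trans ih2
    refine ⟨Quot.lift (fun v => f (Pi.single v 1)) hedge, ?_⟩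
    apply (Pi.basisFun ℝ V).ext
    intro v
    simp only [T, LinearMap.comp_apply, LinearEquiv.coe_coe, Module.Basis.constr_basis]
    simp [LinearMap.funLeft_apply]
  have h1 := Submodule.finrank_mono hsub
  have h2 := LinearMap.finrank_range_le T
  have h3 := Subspace.finrank_add_finrank_dualAnnihilator_eq D
  rw [Module.finrank_fintype_fun_eq_card] at h2 h3
  have h4 : numComponents Q1 = Fintype.card C := Nat.card_eq_fintype_card
  rw [h4]
  omega
end

section
/- Let Q be a finite quiver without loops and multiedges and let R be a lluf proper subquiver of Q such that each connected component of R is a full subquiver of Q. If the contraction Q/R is acyclic, then DE(R) is a face of DE(Q). -/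
open scoped BigOperators

theorem exists_walk_of_transGen {α : Type*} (r : α → α → Prop) (a b : α)
    (h : Relation.TransGen r a b) :
    ∃ (n : ℕ) (v : ℕ → α), 0 < n ∧ v 0 = a ∧ v n = b ∧ ∀ i < n, r (v i) (v (i + 1)) := by
  induction h using Relation.TransGen.head_induction_on with
  | single h =>
    rename_i a
    refine ⟨1, fun i => Nat.casesOn i a (fun _ => b), by simp, rfl, rfl, ?_⟩
    intro i hi
    obtain rfl : i = 0 := by omega
    exact h
  | head h _ ih =>
    rename_i c _ _
    obtain ⟨n, v, hn, h0, h1, h2⟩ := ih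
    refine ⟨n + 1, fun i => Nat.casesOn i c v, by simp, rfl, h1, ?_⟩
    intro i hi
    cases i with
    | zero => simpa [h0] using h
    | succ i => exact h2 i (by omega)

theorem acyclic_irrefl {α : Type*} (E : Set (α × α)) (h : IsAcyclicQ E) (a : α) :
    ¬ Relation.TransGen (edgeRel E) a a := by
  intro ht
  obtain ⟨n, v, hn, h0, h1, h2⟩ := exists_walk_of_transGen _ _ _ ht
  apply h
  rcases Nat.lt_or_ge 1 n with hn1 | hn1
  · refine ⟨n, fun i => v i, hn1, by simp [h0, h1], ?_⟩
    intro i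
    exact h2 i i.2
  · obtain rfl : n = 1 := by omega
    refine ⟨2, fun _ => a, by omega, rfl, ?_⟩
    intro i
    have := h2 0 (by omega)
    simp only [zero_add, h0, h1] at this
    exact this

theorem exists_height {α : Type*} [Finite α] (E : Set (α × α)) (h : IsAcyclicQ E) :
    ∃ f : α → ℝ, ∀ a b, (a, b) ∈ E → f a < f b := by
  refine ⟨fun a => ({b | Relation.TransGen (edgeRel E) b a}.ncard : ℝ), ?_⟩
  intro a b hab
  have hab' : edgeRel E a b := hab
  simp only [Nat.cast_lt]
  apply Set.ncard_lt_ncard _ (Set.toFinite _)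
  rw [Set.ssubset_iff_of_subset]
  · exact ⟨a, Relation.TransGen.single hab', acyclic_irrefl E h a⟩
  · intro c hc
    exact Relation.TransGen.tail hc hab'

/-- If each connected component of a lluf proper subquiver `R` is a full subquiver of `Q`
and `Q/R` is acyclic, then `DE(R)` is a face of `DE(Q)`. -/
theorem face_of_acyclic_contraction {V : Type*} [Fintype V] [DecidableEq V]
    (Q1 R1 : Set (V × V)) (hloop : ∀ v : V, (v, v) ∉ Q1) (hproper : R1 ⊂ Q1)
    (hfull : ComponentsFull Q1 R1) (hacyc : IsAcyclicQ (contraction Q1 R1)) :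
    IsFaceOf (DE R1) (DE Q1) := by
  obtain ⟨f, hf⟩ := exists_height _ hacyc
  let g : V → ℝ := fun v => f (Quot.mk _ v)
  let l : (V → ℝ) →ₗ[ℝ] ℝ := ∑ v, g v • LinearMap.proj v
  have hl : ∀ e : V × V, l (epsVec e) = g e.1 - g e.2 := by
    intro e
    simp [l, epsVec, mul_sub, Finset.sum_sub_distrib]
  have hR : ∀ e ∈ R1, l (epsVec e) = 0 := by
    intro e he
    have : (Quot.mk _ e.1 : Quot (Relation.EqvGen (edgeRel R1))) = Quot.mk _ e.2 :=
      Quot.sound (Relation.EqvGen.rel _ _ he)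
    rw [hl]
    simp [g, this]
  have hQ : ∀ e ∈ Q1, e ∉ R1 → l (epsVec e) < 0 := by
    intro e he he'
    rw [hl]
    have := hf (Quot.mk _ e.1) (Quot.mk _ e.2) ⟨e, ⟨he, he'⟩, rfl⟩
    simp only [g]
    linarith
  have hconv : Convex ℝ (DE R1) := convex_convexHull ℝ _
  have key : DE Q1 ⊆ {x | l x ≤ 0 ∧ (l x = 0 → x ∈ DE R1)} := by
    apply convexHull_min
    · rintro _ ⟨e, he, rfl⟩
      by_cases heR : e ∈ R1
      · exact ⟨(hR e heR).le, fun _ => subset_convexHull ℝ _ ⟨e, heR, rfl⟩⟩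
      · exact ⟨(hQ e he heR).le, fun h => absurd h (hQ e he heR).ne⟩
    · rintro x ⟨hx, hx'⟩ y ⟨hy, hy'⟩ a b ha hb hab
      have h1 : a * l x ≤ 0 := mul_nonpos_of_nonneg_of_nonpos ha hx
      have h2 : b * l y ≤ 0 := mul_nonpos_of_nonneg_of_nonpos hb hy
      have h3 : l (a • x + b • y) = a * l x + b * l y := by simp
      refine ⟨by rw [h3]; linarith, fun h => ?_⟩
      rw [h3] at h
      have h4 : a * l x = 0 := by linarith
      have h5 : b * l y = 0 := by linarith
      rcases mul_eq_zero.1 h4 with h4 | h4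
      · obtain rfl : b = 1 := by linarith
        subst h4
        simpa using hy' (by simpa using h5)
      rcases mul_eq_zero.1 h5 with h5 | h5
      · obtain rfl : a = 1 := by linarith
        subst h5
        simpa using hx' (by simpa using h4)
      exact hconv (hx' h4) (hy' h5) ha hb hab
  refine Or.inr ⟨l, 0, fun x hx => (key hx).1, Set.Subset.antisymm ?_ ?_⟩
  · intro x hx
    refine ⟨convexHull_mono (Set.image_mono hproper.1) hx, ?_⟩
    have : DE R1 ⊆ {x | l x = 0} := by
      apply convexHull_min
      · rintro _ ⟨e, he, rfl⟩
        exact hR e he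
      · intro x hx y hy a b _ _ _
        simp only [Set.mem_ofPred_eq] at hx hy ⊢
        simp [hx, hy]
    exact this hx
  · rintro x ⟨hx, hx'⟩
    exact (key hx).2 hx'
end

section
/- Let Q be a finite quiver without loops and multiedges and let R be a lluf proper subquiver of Q. If R admits a rank function ρ ∈ ℝ^{Q_0} such that (ρ(v)−ρ(w)+1)(ρ(v')−ρ(w')+1) > 0 for any (v,w),(v',w') ∈ Q_1 ∖ R_1, then DE(R) is a face of DE(Q). -/
open scoped BigOperators

/-- If `l ≤ c` on `T`, with `l = c` on `S` and `l < c` on `T` away from `S`, then every point of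
`conv T` lies in `conv S` with `l = c`, or satisfies `l < c`. -/
theorem convexHull_face_aux {E : Type*} [AddCommGroup E] [Module ℝ E] (S T : Set E)
    (l : E →ₗ[ℝ] ℝ) (c : ℝ) (hS : ∀ x ∈ S, l x = c) (hT : ∀ x ∈ T, x ∈ S ∨ l x < c) :
    ∀ x ∈ convexHull ℝ T, (x ∈ convexHull ℝ S ∧ l x = c) ∨ l x < c := by
  have key : convexHull ℝ T ⊆ {x | (x ∈ convexHull ℝ S ∧ l x = c) ∨ l x < c} := by
    apply convexHull_min
    · intro x hx
      rcases hT x hx with h | h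
      · exact Or.inl ⟨subset_convexHull ℝ S h, hS x h⟩
      · exact Or.inr h
    · rw [convex_iff_forall_pos]
      intro x hx y hy a b ha hb hab
      have hl : l (a • x + b • y) = a * l x + b * l y := by simp
      have hc : c = a * c + b * c := by rw [← add_mul, hab, one_mul]
      rcases hx with ⟨hx, hx'⟩ | hx
      · rcases hy with ⟨hy, hy'⟩ | hy
        · left
          refine ⟨convex_convexHull ℝ S hx hy ha.le hb.le hab, ?_⟩
          rw [hl, hx', hy', ← hc]
        · right
          rw [hl, hx']
          have := mul_lt_mul_of_pos_left hy hb
          linarith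
      · right
        have hy' : l y ≤ c := by
          rcases hy with ⟨_, hy⟩ | hy
          · exact hy.le
          · exact hy.le
        rw [hl]
        have h1 := mul_lt_mul_of_pos_left hx ha
        have h2 := mul_le_mul_of_nonneg_left hy' hb.le
        linarith
  exact fun x hx => key hx

/-- If a lluf proper subquiver `R` has a rank function with the positivity condition on
`Q_1 \ R_1`, then `DE(R)` is a face of `DE(Q)`. -/
theorem face_of_rank_function {V : Type*} [Fintype V] [DecidableEq V]
    (Q1 R1 : Set (V × V)) (hloop : ∀ v : V, (v, v) ∉ Q1) (hproper : R1 ⊂ Q1)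
    (ρ : V → ℝ) (hρ : ∀ e ∈ R1, ρ e.1 + 1 = ρ e.2)
    (hpos : ∀ e ∈ Q1 \ R1, ∀ e' ∈ Q1 \ R1,
      0 < (ρ e.1 - ρ e.2 + 1) * (ρ e'.1 - ρ e'.2 + 1)) :
    IsFaceOf (DE R1) (DE Q1) := by
  obtain ⟨hsub, hne⟩ := hproper
  obtain ⟨e₀, he₀Q, he₀R⟩ := Set.not_subset.mp hne
  let f : (V → ℝ) →ₗ[ℝ] ℝ := ∑ u, ρ u • LinearMap.proj u
  have hf : ∀ e : V × V, f (epsVec e) = ρ e.1 - ρ e.2 := by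
    intro e
    simp [f, epsVec, mul_sub, Finset.sum_sub_distrib]
  let g : ℝ := ρ e₀.1 - ρ e₀.2 + 1
  have aux := convexHull_face_aux (epsVec '' R1) (epsVec '' Q1) ((-g) • f) g
    (by
      rintro _ ⟨e, he, rfl⟩
      have h := hρ e he
      have h2 : ρ e.1 - ρ e.2 = -1 := by linarith
      rw [LinearMap.smul_apply, hf, h2, smul_eq_mul]
      ring)
    (by
      rintro _ ⟨e, he, rfl⟩
      by_cases heR : e ∈ R1
      · exact Or.inl ⟨e, heR, rfl⟩
      · right
        have h : 0 < g * (ρ e.1 - ρ e.2 + 1) := hpos e₀ ⟨he₀Q, he₀R⟩ e ⟨he, heR⟩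
        rw [LinearMap.smul_apply, hf, smul_eq_mul]
        linarith)
  have hRface : ∀ x ∈ convexHull ℝ (epsVec '' R1), ((-g) • f) x = g := by
    intro x hx
    have hconv : convexHull ℝ (epsVec '' R1) ⊆ {x | ((-g) • f) x = g} := by
      apply convexHull_min
      · rintro _ ⟨e, he, rfl⟩
        have h := hρ e he
        have h2 : ρ e.1 - ρ e.2 = -1 := by linarith
        rw [Set.mem_setOf_eq, LinearMap.smul_apply, hf, h2, smul_eq_mul]
        ring
      · exact convex_hyperplane ((-g) • f).isLinear g
    exact hconv hx
  right
  refine ⟨(-g) • f, g, ?_, ?_⟩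
  · intro x hx
    rcases aux x hx with h | h
    · exact h.2.le
    · exact h.le
  · ext x
    constructor
    · intro hx
      exact ⟨convexHull_mono (Set.image_mono hsub) hx, hRface x hx⟩
    · rintro ⟨hx, hx'⟩
      rcases aux x hx with h | h
      · exact h.1
      · exact absurd hx' h.ne
end

section
/- Let Q be a finite quiver without loops and multiedges and let R be a lluf subquiver of Q with |π_0(R)| = |π_0(Q)| + 1. If DE(R) is a facet of DE(Q), then each connected component of R is a full subquiver of Q. -/
open scoped BigOperators

theorem epsVec_mem_DE {V : Type*} [DecidableEq V] {E : Set (V × V)} {e : V × V}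
    (h : e ∈ E) : epsVec e ∈ DE E :=
  subset_convexHull ℝ _ ⟨e, h, rfl⟩

theorem mem_of_epsVec_mem_DE {V : Type*} [DecidableEq V] {E : Set (V × V)} {v w : V}
    (hvw : v ≠ w) (h : epsVec (v, w) ∈ DE E) : (v, w) ∈ E := by
  by_contra hn
  have hsub : DE E ⊆ {x : V → ℝ | x v - x w ≤ 1} := by
    apply convexHull_min
    · rintro _ ⟨⟨a, b⟩, hab, rfl⟩
      have hne : ¬ (v = a ∧ w = b) := by
        rintro ⟨rfl, rfl⟩
        exact hn hab
      simp only [Set.mem_setOf_eq, epsVec]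
      by_cases h1 : v = a <;> by_cases h2 : w = b <;> by_cases h3 : v = b <;>
        by_cases h4 : w = a <;> simp_all <;> norm_num
    · intro x hx y hy a b ha hb hab
      simp only [Set.mem_setOf_eq, Pi.add_apply, Pi.smul_apply, smul_eq_mul] at *
      nlinarith
  have := hsub h
  simp only [Set.mem_setOf_eq, epsVec] at this
  simp [hvw, hvw.symm] at this
  norm_num at this

theorem epsVec_mem_span {V : Type*} [DecidableEq V] {E : Set (V × V)} {v w : V}
    (h : Relation.EqvGen (edgeRel E) v w) :
    epsVec (v, w) ∈ Submodule.span ℝ (epsVec '' E) := by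
  induction h with
  | rel a b hab => exact Submodule.subset_span ⟨(a, b), hab, rfl⟩
  | refl a =>
    have : epsVec (a, a) = (0 : V → ℝ) := by ext u; simp [epsVec]
    rw [this]; exact Submodule.zero_mem _
  | symm a b _ ih =>
    have : epsVec (b, a) = -(epsVec (a, b) : V → ℝ) := by ext u; simp [epsVec]
    rw [this]; exact Submodule.neg_mem _ ih
  | trans a b c _ _ ih1 ih2 =>
    have : epsVec (a, c) = (epsVec (a, b) + epsVec (b, c) : V → ℝ) := by
      ext u; simp [epsVec]
    rw [this]; exact Submodule.add_mem _ ih1 ih2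

theorem eqvGen_of_epsVec_mem_span {V : Type*} [Fintype V] [DecidableEq V] {E : Set (V × V)}
    {v w : V} (h : epsVec (v, w) ∈ Submodule.span ℝ (epsVec '' E)) :
    Relation.EqvGen (edgeRel E) v w := by
  classical
  by_contra hn
  let g : V → ℝ := fun u => if Relation.EqvGen (edgeRel E) v u then 1 else 0
  let f : (V → ℝ) →ₗ[ℝ] ℝ := ∑ u, g u • LinearMap.proj u
  have hf : ∀ a b, f (epsVec (a, b)) = g a - g b := by
    intro a b
    simp [f, epsVec, LinearMap.sum_apply, mul_sub, Finset.sum_sub_distrib]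
  have hle : Submodule.span ℝ (epsVec '' E) ≤ LinearMap.ker f := by
    rw [Submodule.span_le]
    rintro _ ⟨⟨a, b⟩, hab, rfl⟩
    have hab' : Relation.EqvGen (edgeRel E) a b := .rel _ _ hab
    have : Relation.EqvGen (edgeRel E) v a ↔ Relation.EqvGen (edgeRel E) v b :=
      ⟨fun h => h.trans _ _ _ hab', fun h => h.trans _ _ _ (hab'.symm _ _)⟩
    simp [hf, g, this]
  have h0 := hle h
  rw [LinearMap.mem_ker, hf] at h0
  simp [g, hn, Relation.EqvGen.refl] at h0

theorem span_lt_span {V : Type*} [Fintype V] [DecidableEq V] {Q1 R1 : Set (V × V)}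
    (hsub : R1 ⊆ Q1) (hcomp : numComponents R1 = numComponents Q1 + 1) :
    Submodule.span ℝ (epsVec '' R1) < Submodule.span ℝ (epsVec '' Q1) := by
  refine lt_of_le_of_ne (Submodule.span_mono (Set.image_mono hsub)) fun heq => ?_
  have : Relation.EqvGen (edgeRel R1) = Relation.EqvGen (edgeRel Q1) := by
    ext a b
    constructor
    · intro h
      exact eqvGen_of_epsVec_mem_span (heq ▸ epsVec_mem_span h)
    · intro h
      exact eqvGen_of_epsVec_mem_span (heq ▸ epsVec_mem_span h)
  unfold numComponents at hcomp
  rw [this] at hcomp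
  omega

/-- If `DE(R)` is a facet of `DE(Q)` and `|π_0(R)| = |π_0(Q)| + 1`, then each connected
component of `R` is a full subquiver of `Q`. -/
theorem facet_is_full {V : Type*} [Fintype V] [DecidableEq V]
    (Q1 R1 : Set (V × V)) (hloop : ∀ v : V, (v, v) ∉ Q1) (hsub : R1 ⊆ Q1)
    (hcomp : numComponents R1 = numComponents Q1 + 1)
    (hfacet : IsFacetOf (DE R1) (DE Q1)) :
    ComponentsFull Q1 R1 := by
  intro v w hvw hQ
  have hne : v ≠ w := by
    rintro rfl
    exact hloop _ hQ
  apply mem_of_epsVec_mem_DE hne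
  obtain ⟨hface, hdim⟩ := hfacet
  rcases hface with hEq | ⟨l, c, -, hF⟩
  · rw [hEq]; exact epsVec_mem_DE hQ
  rw [hF]
  refine ⟨epsVec_mem_DE hQ, ?_⟩
  have hlR : ∀ e ∈ R1, l (epsVec e) = c := by
    intro e he
    have : epsVec e ∈ DE R1 := epsVec_mem_DE he
    rw [hF] at this
    exact this.2
  have hmem := epsVec_mem_span hvw
  obtain ⟨r, hr⟩ : R1.Nonempty := by
    by_contra hemp
    rw [Set.not_nonempty_iff_eq_empty] at hemp
    subst hemp
    have h0 : (epsVec (v, w) : V → ℝ) = 0 := by simpa using hmem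
    have := congrFun h0 v
    simp [epsVec, hne] at this
  by_cases hf : ∃ f : (V → ℝ) →ₗ[ℝ] ℝ, ∀ e ∈ Q1, f (epsVec e) = 1
  · obtain ⟨f, hf⟩ := hf
    have hle : Submodule.span ℝ (epsVec '' R1) ≤ LinearMap.ker (l - c • f) := by
      rw [Submodule.span_le]
      rintro _ ⟨e, he, rfl⟩
      simp [hlR e he, hf e (hsub he)]
    have := hle hmem
    simp [hf _ hQ] at this
    linarith
  have hrQ : epsVec r ∈ vectorSpan ℝ (epsVec '' Q1) := by
    by_contra hn
    obtain ⟨f, hfr, hfk⟩ := Submodule.exists_le_ker_of_notMem hn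
    refine hf ⟨(f (epsVec r))⁻¹ • f, fun e he => ?_⟩
    have h1 : epsVec e -ᵥ epsVec r ∈ vectorSpan ℝ (epsVec '' Q1) :=
      vsub_mem_vectorSpan ℝ ⟨e, he, rfl⟩ ⟨r, hsub hr, rfl⟩
    have h2 := hfk h1
    rw [LinearMap.mem_ker, vsub_eq_sub, map_sub, sub_eq_zero] at h2
    simp [h2, hfr]
  have hspanQ : Submodule.span ℝ (epsVec '' Q1) ≤ vectorSpan ℝ (epsVec '' Q1) := by
    rw [Submodule.span_le]
    rintro _ ⟨e, he, rfl⟩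
    have h1 : epsVec e -ᵥ epsVec r ∈ vectorSpan ℝ (epsVec '' Q1) :=
      vsub_mem_vectorSpan ℝ ⟨e, he, rfl⟩ ⟨r, hsub hr, rfl⟩
    have := Submodule.add_mem _ h1 hrQ
    simpa using this
  have hRne : DE R1 ≠ ∅ := Set.Nonempty.ne_empty ⟨_, epsVec_mem_DE hr⟩
  have hQne : DE Q1 ≠ ∅ := Set.Nonempty.ne_empty ⟨_, epsVec_mem_DE hQ⟩
  rw [polyDim, polyDim, if_neg hRne, if_neg hQne, DE, DE, affineSpan_convexHull,
    affineSpan_convexHull, direction_affineSpan, direction_affineSpan] at hdim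
  have hlt := Submodule.finrank_lt_finrank_of_lt (span_lt_span hsub hcomp)
  have hleQ := Submodule.finrank_mono hspanQ
  have hRle : vectorSpan ℝ (epsVec '' R1) ≤ Submodule.span ℝ (epsVec '' R1) := by
    rw [vectorSpan_def, Submodule.span_le]
    rintro _ ⟨x, hx, y, hy, rfl⟩
    exact Submodule.sub_mem _ (Submodule.subset_span hx) (Submodule.subset_span hy)
  have hReq := Submodule.eq_of_le_of_finrank_le hRle (by omega)
  have hker : vectorSpan ℝ (epsVec '' R1) ≤ LinearMap.ker l := by
    rw [vectorSpan_def, Submodule.span_le]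
    rintro _ ⟨_, ⟨a, ha, rfl⟩, _, ⟨b, hb, rfl⟩, rfl⟩
    simp [hlR a ha, hlR b hb]
  rw [hReq] at hker
  have h1 : l (epsVec (v, w)) = 0 := hker hmem
  have h2 : l (epsVec r) = 0 := hker (Submodule.subset_span ⟨r, hr, rfl⟩)
  rw [h1, ← h2, hlR r hr]
end

section
/- Let n ≥ 2 and let C_{2n} be the cycle graph on 2n vertices. The symmetric edge polytope SE(C_{2n}) is a polytope of dimension 2n−1 and has exactly binom(2n, n) facets; moreover, for every dimension d with d+1 < n, the number of d-dimensional faces of SE(C_{2n}) is binom(2n, d+1)·2^{d+1}. -/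
open scoped BigOperators

/-- The edge set of the double of the cycle graph on `ℤ/m`. -/
def cycleDoubleEdges (m : ℕ) : Set (ZMod m × ZMod m) :=
  {p : ZMod m × ZMod m | p.1 - p.2 = 1 ∨ p.2 - p.1 = 1}

/-- The vector of the edge from `i - 1` to `i`. -/
def fv {m : ℕ} (i : ZMod m) : ZMod m → ℝ := epsVec (i, i - 1)

open Classical in
/-- Signed edge vectors: sign `+` on `A`, `-` off `A`. -/
noncomputable def sv {m : ℕ} (A : Finset (ZMod m)) (i : ZMod m) : ZMod m → ℝ :=
  if i ∈ A then fv i else - fv i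

/-- The face spanned by the edges of `T`, with sign `+` on `A`. -/
noncomputable def faceTA {m : ℕ} (T A : Finset (ZMod m)) : Set (ZMod m → ℝ) :=
  convexHull ℝ (sv A '' (T : Set (ZMod m)))

theorem neg_fv {m : ℕ} (i : ZMod m) : - fv i = epsVec (i - 1, i) := by
  funext u; simp [fv, epsVec]

theorem eps_image (m : ℕ) : epsVec '' (cycleDoubleEdges m) =
    {v | ∃ i : ZMod m, v = fv i ∨ v = - fv i} := by
  ext v
  constructor
  · rintro ⟨⟨a, b⟩, h, rfl⟩
    rcases h with h | h
    · refine ⟨a, Or.inl ?_⟩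
      have : b = a - 1 := by rw [← h]; simp
      simp [fv, this]
    · refine ⟨b, Or.inr ?_⟩
      have : a = b - 1 := by rw [← h]; simp
      rw [neg_fv, this]
  · rintro ⟨i, rfl | rfl⟩
    · exact ⟨(i, i - 1), Or.inl (by simp), rfl⟩
    · exact ⟨(i - 1, i), Or.inr (by simp), (neg_fv i).symm⟩

theorem fv_mem {m : ℕ} (i : ZMod m) : fv i ∈ DE (cycleDoubleEdges m) := by
  apply subset_convexHull; rw [eps_image]; exact ⟨i, Or.inl rfl⟩

theorem neg_fv_mem {m : ℕ} (i : ZMod m) : - fv i ∈ DE (cycleDoubleEdges m) := by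
  apply subset_convexHull; rw [eps_image]; exact ⟨i, Or.inr rfl⟩

theorem hull_face {V : Type*} (S : Set (V → ℝ)) (l : (V → ℝ) →ₗ[ℝ] ℝ) (c : ℝ)
    (h : ∀ v ∈ S, l v ≤ c) :
    {x ∈ convexHull ℝ S | l x = c} = convexHull ℝ {v ∈ S | l v = c} := by
  apply Set.Subset.antisymm
  · have key : convexHull ℝ S ⊆ {x | l x ≤ c ∧ (l x = c → x ∈ convexHull ℝ {v ∈ S | l v = c})} := by
      apply convexHull_min
      · intro v hv
        exact ⟨h v hv, fun hc => subset_convexHull ℝ _ ⟨hv, hc⟩⟩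
      · rw [convex_iff_forall_pos]
        rintro x ⟨hx1, hx2⟩ y ⟨hy1, hy2⟩ a b ha hb hab
        have e : l (a • x + b • y) = a * l x + b * l y := by simp
        have e2 : c = a * c + b * c := by rw [← add_mul, hab, one_mul]
        refine ⟨?_, fun hc => ?_⟩
        · rw [e]; nlinarith
        · rw [e] at hc
          have h1 : l x = c := by nlinarith
          have h2 : l y = c := by nlinarith
          exact convex_convexHull ℝ _ (hx2 h1) (hy2 h2) ha.le hb.le hab
    rintro x ⟨hx, hc⟩
    exact (key hx).2 hc
  · apply convexHull_min
    · rintro v ⟨hv, hc⟩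
      exact ⟨subset_convexHull ℝ _ hv, hc⟩
    · exact (convex_convexHull ℝ S).inter (convex_hyperplane l.isLinear c)

section
variable {m : ℕ} [NeZero m]

theorem sum_fv_apply (c : ZMod m → ℝ) (u : ZMod m) :
    (∑ i, c i • fv i) u = c u - c (u + 1) := by
  have : ∀ i : ZMod m, (u = i - 1) = (u + 1 = i) := fun i => by
    rw [eq_sub_iff_add_eq]
  simp [fv, epsVec, mul_sub, Finset.sum_sub_distrib, this]

theorem sum_fv : (∑ i : ZMod m, fv i) = 0 := by
  have := sum_fv_apply (m := m) (fun _ => 1)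
  funext u
  simpa using this u

theorem const_of_sum (c : ZMod m → ℝ) (h : (∑ i, c i • fv i) = 0) (i j : ZMod m) : c i = c j := by
  have h1 : ∀ u, c u = c (u + 1) := fun u => by
    have := sum_fv_apply c u
    rw [h] at this
    simp at this; linarith
  have h2 : ∀ k : ℕ, c (k : ZMod m) = c 0 := by
    intro k
    induction k with
    | zero => simp
    | succ k ih => push_cast; rw [← h1, ih]
  have hi := h2 i.val
  have hj := h2 j.val
  rw [ZMod.natCast_zmod_val] at hi hj
  rw [hi, hj]

theorem linInd (T A : Finset (ZMod m)) (hT : T ≠ Finset.univ) :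
    LinearIndepOn ℝ (sv A) (T : Set (ZMod m)) := by
  classical
  rw [linearIndepOn_finset_iff]
  intro c hc i hi
  have ⟨j, hj⟩ : ∃ j, j ∉ T := by
    by_contra hcon; push Not at hcon; exact hT (Finset.eq_univ_iff_forall.2 hcon)
  have h := const_of_sum (fun i => if i ∈ T then (if i ∈ A then c i else - c i) else 0) (by
    rw [← hc, ← Finset.sum_subset (Finset.subset_univ T)]
    · refine Finset.sum_congr rfl fun i hi => ?_
      simp only [hi, if_true, sv]
      split_ifs <;> simp
    · intro i _ hi; simp [hi]) i j
  simp only [hi, hj, if_true, if_false] at h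
  split_ifs at h <;> simpa using h

theorem exists_fun (g : ZMod m → ℝ) (hg : ∑ i, g i = 0) :
    ∃ l : (ZMod m → ℝ) →ₗ[ℝ] ℝ, ∀ i, l (fv i) = g i := by
  classical
  let h : ZMod m → ℝ := fun u => ∑ j ∈ Finset.range (u.val + 1), g (j : ZMod m)
  let l : (ZMod m → ℝ) →ₗ[ℝ] ℝ := ∑ u, h u • LinearMap.proj u
  have hl : ∀ i, l (fv i) = h i - h (i - 1) := by
    intro i
    simp [l, fv, epsVec, mul_sub, Finset.sum_sub_distrib]
  have hne : ∀ i, i ≠ 0 → l (fv i) = g i := by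
    intro i hi
    rw [hl]
    have hv : i.val ≠ 0 := by simpa using hi
    obtain ⟨k, hk⟩ := Nat.exists_eq_succ_of_ne_zero hv
    have hlt := ZMod.val_lt i
    have hi' : i = ((k + 1 : ℕ) : ZMod m) := by rw [← Nat.succ_eq_add_one, ← hk]; simp
    have h2 : (i - 1).val = k := by
      rw [hi']; push_cast; rw [add_sub_cancel_right]
      exact ZMod.val_natCast_of_lt (by omega)
    simp only [h, h2, hk, Finset.sum_range_succ _ (k + 1)]
    rw [hi']; simp
  refine ⟨l, fun i => ?_⟩
  by_cases hi : i = 0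
  · subst hi
    have h0 : ∑ i, l (fv i) = 0 := by rw [← map_sum, sum_fv, map_zero]
    rw [← Finset.add_sum_erase _ _ (Finset.mem_univ (0 : ZMod m))] at h0 hg
    have : ∑ x ∈ Finset.univ.erase (0 : ZMod m), l (fv x) = ∑ x ∈ Finset.univ.erase (0 : ZMod m), g x :=
      Finset.sum_congr rfl fun x hx => hne x (Finset.ne_of_mem_erase hx)
    linarith
  · exact hne i hi

/-- `g` realizes the signed set `(T, A)`. -/
def Realizes (g : ZMod m → ℝ) (T A : Finset (ZMod m)) : Prop :=
  ∑ i, g i = 0 ∧ (∀ i, |g i| ≤ 1) ∧ (∀ i, g i = 1 ↔ i ∈ A) ∧ (∀ i, g i = -1 ↔ i ∈ T ∧ i ∉ A) ∧ A ⊆ T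

theorem face_eq (l : (ZMod m → ℝ) →ₗ[ℝ] ℝ) (T A : Finset (ZMod m))
    (h : Realizes (fun i => l (fv i)) T A) :
    {x ∈ DE (cycleDoubleEdges m) | l x = 1} = faceTA T A ∧
      ∀ x ∈ DE (cycleDoubleEdges m), l x ≤ 1 := by
  obtain ⟨-, h1, hA, hB, hAT⟩ := h
  have hle : ∀ v ∈ epsVec '' (cycleDoubleEdges m), l v ≤ 1 := by
    rw [eps_image]
    rintro v ⟨i, rfl | rfl⟩
    · exact (abs_le.1 (h1 i)).2
    · have := (abs_le.1 (h1 i)).1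
      simp at this ⊢; linarith
  constructor
  · rw [DE, hull_face _ _ _ hle, faceTA, eps_image]
    congr 1
    ext v
    constructor
    · rintro ⟨⟨i, rfl | rfl⟩, hv⟩
      · have := (hA i).1 hv
        exact ⟨i, hAT this, by simp [sv, this]⟩
      · have := (hB i).1 (by simp at hv ⊢; linarith)
        exact ⟨i, this.1, by simp [sv, this.2]⟩
    · rintro ⟨i, hi, rfl⟩
      by_cases hiA : i ∈ A
      · simp only [sv, hiA, if_true]
        exact ⟨⟨i, Or.inl rfl⟩, (hA i).2 hiA⟩
      · simp only [sv, hiA, if_false]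
        have := (hB i).2 ⟨hi, hiA⟩
        refine ⟨⟨i, Or.inr rfl⟩, ?_⟩
        simp at this ⊢; linarith
  · intro x hx
    exact convexHull_min hle (convex_halfSpace_le l.isLinear 1) hx

theorem mem_face {g : ZMod m → ℝ} {T A : Finset (ZMod m)} (h : Realizes g T A) :
    (∀ i, fv i ∈ faceTA T A ↔ i ∈ A) ∧ (∀ i, - fv i ∈ faceTA T A ↔ i ∈ T ∧ i ∉ A) := by
  obtain ⟨l, hl⟩ := exists_fun g h.1
  obtain rfl : (fun i => l (fv i)) = g := funext hl
  rw [← (face_eq l T A h).1]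
  obtain ⟨-, -, hA, hB, -⟩ := h
  refine ⟨fun i => ?_, fun i => ?_⟩
  · rw [← hA]; simp [fv_mem]
  · rw [← hB]; simp [neg_fv_mem, neg_eq_iff_eq_neg]

theorem face_inj {g g' : ZMod m → ℝ} {T A T' A' : Finset (ZMod m)} (h : Realizes g T A)
    (h' : Realizes g' T' A') (e : faceTA T A = faceTA T' A') : T = T' ∧ A = A' := by
  have a := mem_face h
  have b := mem_face h'
  rw [e] at a
  have hA : A = A' := by ext i; rw [← a.1, b.1]
  refine ⟨?_, hA⟩
  ext i
  have hB := (a.2 i).symm.trans (b.2 i)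
  have hs := h.2.2.2.2
  have hs' := h'.2.2.2.2
  subst hA
  by_cases hi : i ∈ A
  · simp [hs hi, hs' hi]
  · simpa [hi] using hB

theorem isFace_iff (F : Set (ZMod m → ℝ)) : IsFaceOf F (DE (cycleDoubleEdges m)) ↔
    F = DE (cycleDoubleEdges m) ∨ ∃ g T A, Realizes g T A ∧ F = faceTA T A := by
  classical
  constructor
  · rintro (h | ⟨l, c, hc, rfl⟩)
    · exact Or.inl h
    have h1 : ∀ i, l (fv i) ≤ c := fun i => hc _ (fv_mem i)
    have h2 : ∀ i, - l (fv i) ≤ c := fun i => by simpa using hc _ (neg_fv_mem i)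
    have hc0 : 0 ≤ c := by linarith [h1 0, h2 0]
    rcases hc0.eq_or_lt with rfl | hpos
    · left
      rw [DE, hull_face _ _ _ (fun v hv => hc v (subset_convexHull ℝ _ hv))]
      congr 1
      ext v
      simp only [Set.mem_ofPred_eq, and_iff_left_iff_imp]
      rw [eps_image]
      rintro ⟨i, rfl | rfl⟩
      · linarith [h1 i, h2 i]
      · rw [map_neg]; linarith [h1 i, h2 i]
    · right
      let l' := c⁻¹ • l
      have hl' : ∀ x, l' x = c⁻¹ * l x := fun x => rfl
      have hR : Realizes (fun i => l' (fv i))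
          (Finset.univ.filter fun i => l' (fv i) = 1 ∨ l' (fv i) = -1)
          (Finset.univ.filter fun i => l' (fv i) = 1) := by
        refine ⟨?_, ?_, ?_, ?_, ?_⟩
        · rw [← map_sum, sum_fv, map_zero]
        · intro i
          simp only [abs_le, hl']
          have : c⁻¹ * c = 1 := inv_mul_cancel₀ hpos.ne'
          have hi : 0 < c⁻¹ := inv_pos.2 hpos
          constructor <;> nlinarith [h1 i, h2 i]
        · intro i; simp
        · intro i
          simp only [Finset.mem_filter, Finset.mem_univ, true_and]
          constructor
          · intro h; rw [h]; norm_num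
          · rintro ⟨h | h, h'⟩
            · exact absurd h h'
            · exact h
        · intro i; simp +contextual
      refine ⟨_, _, _, hR, ?_⟩
      rw [← (face_eq l' _ _ hR).1]
      ext x
      simp only [Set.mem_ofPred_eq, hl', inv_mul_eq_one₀ hpos.ne']
      tauto
  · rintro (h | ⟨g, T, A, h, rfl⟩)
    · exact Or.inl h
    · right
      obtain ⟨l, hl⟩ := exists_fun g h.1
      obtain rfl : (fun i => l (fv i)) = g := funext hl
      exact ⟨l, 1, (face_eq l T A h).2, (face_eq l T A h).1.symm⟩

theorem polyDim_hull {V : Type*} (S : Set (V → ℝ)) (hS : S.Nonempty) :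
    polyDim (convexHull ℝ S) = (Module.finrank ℝ (vectorSpan ℝ S) : ℤ) := by
  rw [polyDim, if_neg, affineSpan_convexHull, direction_affineSpan]
  rw [convexHull_eq_empty]
  exact hS.ne_empty

theorem finrank_vs (T A : Finset (ZMod m)) (hT : T ≠ Finset.univ) (hne : T.Nonempty) :
    Module.finrank ℝ (vectorSpan ℝ (sv A '' (T : Set (ZMod m)))) + 1 = T.card := by
  have h := (linInd T A hT).affineIndependent
  have hpos := hne.card_pos
  have := h.finrank_vectorSpan (n := T.card - 1) (by simp; omega)
  have e : Set.range (fun x : (T : Set (ZMod m)) => sv A x) = sv A '' (T : Set (ZMod m)) := by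
    rw [Set.image_eq_range]
  rw [e] at this
  omega

theorem polyDim_face (T A : Finset (ZMod m)) (hT : T ≠ Finset.univ) :
    polyDim (faceTA T A) = (T.card : ℤ) - 1 := by
  rcases T.eq_empty_or_nonempty with rfl | hne
  · simp [faceTA, polyDim]
  · rw [faceTA, polyDim_hull _ (hne.to_set.image _)]
    have := finrank_vs T A hT hne
    omega

theorem sv_mem_span (A : Finset (ZMod m)) (i : ZMod m) :
    sv A i ∈ Submodule.span ℝ (Set.range (fv (m := m))) := by
  have : fv i ∈ Submodule.span ℝ (Set.range (fv (m := m))) := Submodule.subset_span ⟨i, rfl⟩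
  unfold sv; split_ifs
  · exact this
  · exact Submodule.neg_mem _ this

theorem finrank_W : Module.finrank ℝ (Submodule.span ℝ (Set.range (fv (m := m)))) + 1 = m := by
  classical
  have hm : 0 < m := NeZero.pos m
  apply le_antisymm
  · have : Module.finrank ℝ (Submodule.span ℝ (Set.range (fv (m := m)))) <
        Module.finrank ℝ (ZMod m → ℝ) := by
      apply Submodule.finrank_lt
      intro htop
      let s : (ZMod m → ℝ) →ₗ[ℝ] ℝ := ∑ u, LinearMap.proj u
      have hs : Submodule.span ℝ (Set.range (fv (m := m))) ≤ LinearMap.ker s := by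
        rw [Submodule.span_le]
        rintro _ ⟨i, rfl⟩
        simp [s, fv, epsVec]
      rw [htop] at hs
      have h1 : s (Pi.single 0 1) = 0 := hs (Submodule.mem_top)
      simp [s] at h1
    simp [ZMod.card] at this
    omega
  · have hT : (Finset.univ.erase (0 : ZMod m)) ≠ Finset.univ := by
      intro h
      have := Finset.mem_univ (0 : ZMod m)
      rw [← h] at this
      simp at this
    have hli := linInd (Finset.univ.erase (0 : ZMod m)) ∅ hT
    have h := finrank_span_eq_card hli
    have hle : Submodule.span ℝ (Set.range fun x : ((Finset.univ.erase (0 : ZMod m) : Finset (ZMod m)) : Set (ZMod m)) => sv ∅ x) ≤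
        Submodule.span ℝ (Set.range (fv (m := m))) := by
      rw [Submodule.span_le]
      rintro _ ⟨i, rfl⟩
      exact sv_mem_span _ _
    have h2 := Submodule.finrank_mono hle
    rw [h] at h2
    simp [ZMod.card] at h2
    omega

theorem polyDim_P : polyDim (DE (cycleDoubleEdges m)) = (m : ℤ) - 1 := by
  have hne : (epsVec '' (cycleDoubleEdges m)).Nonempty := by
    rw [eps_image]; exact ⟨fv 0, 0, Or.inl rfl⟩
  have : vectorSpan ℝ (epsVec '' (cycleDoubleEdges m)) = Submodule.span ℝ (Set.range (fv (m := m))) := by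
    rw [eps_image]
    apply le_antisymm
    · rw [vectorSpan_def, Submodule.span_le]
      have hmem : ∀ v ∈ {v | ∃ i : ZMod m, v = fv i ∨ v = - fv i},
          v ∈ Submodule.span ℝ (Set.range (fv (m := m))) := by
        rintro v ⟨i, rfl | rfl⟩
        · exact Submodule.subset_span ⟨i, rfl⟩
        · exact Submodule.neg_mem _ (Submodule.subset_span ⟨i, rfl⟩)
      rintro _ ⟨a, ha, b, hb, rfl⟩
      exact Submodule.sub_mem _ (hmem a ha) (hmem b hb)
    · rw [Submodule.span_le]
      rintro _ ⟨i, rfl⟩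
      have h := vsub_mem_vectorSpan ℝ (s := {v | ∃ i : ZMod m, v = fv i ∨ v = - fv i})
        (p₁ := fv i) (p₂ := - fv i) ⟨i, Or.inl rfl⟩ ⟨i, Or.inr rfl⟩
      have h2 := Submodule.smul_mem _ (1 / 2 : ℝ) h
      have e : (1 / 2 : ℝ) • (fv i -ᵥ - fv i) = fv i := by
        rw [vsub_eq_sub, sub_neg_eq_add, ← two_smul ℝ, smul_smul]; norm_num
      rw [e] at h2
      exact h2
  rw [DE, polyDim_hull _ hne, this]
  have := finrank_W (m := m)
  omega

theorem polyDim_full {g : ZMod m → ℝ} {A : Finset (ZMod m)} (hm : 2 ≤ m)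
    (h : Realizes g Finset.univ A) : polyDim (faceTA Finset.univ A) = (m : ℤ) - 2 := by
  classical
  rw [faceTA, polyDim_hull _ (by exact ⟨sv A 0, 0, by simp, rfl⟩)]
  have hW := finrank_W (m := m)
  have lower : m ≤ Module.finrank ℝ (vectorSpan ℝ (sv A '' ((Finset.univ : Finset (ZMod m)) : Set (ZMod m)))) + 2 := by
    have hT : (Finset.univ.erase (0 : ZMod m)) ≠ Finset.univ := by
      intro h
      have := Finset.mem_univ (0 : ZMod m)
      rw [← h] at this
      simp at this
    have hcard : (Finset.univ.erase (0 : ZMod m)).card = m - 1 := by simp [ZMod.card]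
    have h1 := finrank_vs (Finset.univ.erase (0 : ZMod m)) A hT (by
      rw [← Finset.card_pos]; omega)
    have h2 := Submodule.finrank_mono (vectorSpan_mono ℝ (Set.image_mono (f := sv A)
      (Finset.coe_subset.2 (Finset.subset_univ (Finset.univ.erase (0 : ZMod m))))))
    omega
  have upper : Module.finrank ℝ (vectorSpan ℝ (sv A '' ((Finset.univ : Finset (ZMod m)) : Set (ZMod m)))) <
      Module.finrank ℝ (Submodule.span ℝ (Set.range (fv (m := m)))) := by
    apply Submodule.finrank_lt_finrank_of_lt
    obtain ⟨l, hl⟩ := exists_fun g h.1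
    have hsv : ∀ i, l (sv A i) = 1 := by
      intro i
      by_cases hi : i ∈ A
      · simp only [sv, hi, if_true, hl]; exact (h.2.2.1 i).2 hi
      · simp only [sv, hi, if_false, map_neg, hl]
        rw [(h.2.2.2.1 i).2 ⟨Finset.mem_univ i, hi⟩]; norm_num
    have hker : vectorSpan ℝ (sv A '' ((Finset.univ : Finset (ZMod m)) : Set (ZMod m))) ≤ LinearMap.ker l := by
      rw [vectorSpan_def, Submodule.span_le]
      rintro _ ⟨_, ⟨i, -, rfl⟩, _, ⟨j, -, rfl⟩, rfl⟩
      simp [hsv]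
    rw [SetLike.lt_iff_le_and_exists]
    refine ⟨?_, sv A 0, sv_mem_span A 0, fun h0 => ?_⟩
    · rw [vectorSpan_def, Submodule.span_le]
      rintro _ ⟨_, ⟨i, -, rfl⟩, _, ⟨j, -, rfl⟩, rfl⟩
      exact Submodule.sub_mem _ (sv_mem_span A i) (sv_mem_span A j)
    · have := hker h0
      rw [LinearMap.mem_ker, hsv] at this
      norm_num at this
  omega

theorem card_lt_aux (g : ZMod m → ℝ) (h0 : ∑ i, g i = 0) (h1 : ∀ i, -1 ≤ g i)
    (A : Finset (ZMod m)) (hA : ∀ i ∈ A, g i = 1) (j : ZMod m) (hj : j ∉ A) (hgj : -1 < g j) :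
    2 * A.card < m := by
  classical
  have e : ∑ i, (g i + 1) = m := by
    rw [Finset.sum_add_distrib, h0]; simp [ZMod.card]
  have hs : ∑ i ∈ A, (g i + 1) = 2 * A.card := by
    rw [Finset.sum_congr rfl (fun i hi => by rw [hA i hi])]
    simp; ring
  have : ∑ i ∈ A, (g i + 1) < ∑ i, (g i + 1) :=
    Finset.sum_lt_sum_of_subset (Finset.subset_univ A) (Finset.mem_univ j) hj (by linarith)
      (fun i _ _ => by linarith [h1 i])
  rw [e, hs] at this
  exact_mod_cast this

theorem realizes_lt {g : ZMod m → ℝ} {T A : Finset (ZMod m)} (h : Realizes g T A)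
    (hT : T ≠ Finset.univ) : 2 * A.card < m ∧ 2 * (T \ A).card < m := by
  classical
  obtain ⟨h0, h1, hA, hB, hs⟩ := h
  have ⟨j, hj⟩ : ∃ j, j ∉ T := by
    by_contra hcon; push Not at hcon; exact hT (Finset.eq_univ_iff_forall.2 hcon)
  have hjA : j ∉ A := fun h => hj (hs h)
  have hj1 : g j ≠ 1 := fun h => hjA ((hA j).1 h)
  have hj2 : g j ≠ -1 := fun h => hj ((hB j).1 h).1
  have hb := abs_le.1 (h1 j)
  constructor
  · exact card_lt_aux g h0 (fun i => (abs_le.1 (h1 i)).1) A (fun i hi => (hA i).2 hi) j hjA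
      (lt_of_le_of_ne hb.1 hj2.symm)
  · refine card_lt_aux (fun i => - g i) (by simp [h0]) (fun i => ?_) (T \ A) (fun i hi => ?_) j
      (by simp [hj]) ?_
    · linarith [(abs_le.1 (h1 i)).2]
    · rw [(hB i).2 (by simpa using hi)]; norm_num
    · linarith [lt_of_le_of_ne hb.2 hj1]

theorem realizes_univ {g : ZMod m → ℝ} {A : Finset (ZMod m)} (h : Realizes g Finset.univ A) :
    2 * A.card = m := by
  classical
  obtain ⟨h0, h1, hA, hB, hs⟩ := h
  have e : ∑ i, (g i + 1) = m := by
    rw [Finset.sum_add_distrib, h0]; simp [ZMod.card]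
  have e2 : ∑ i, (g i + 1) = ∑ i, if i ∈ A then (2 : ℝ) else 0 := by
    refine Finset.sum_congr rfl fun i _ => ?_
    split_ifs with hi
    · rw [(hA i).2 hi]; norm_num
    · rw [(hB i).2 ⟨Finset.mem_univ i, hi⟩]; norm_num
  rw [e] at e2
  simp at e2
  have : ((2 * A.card : ℕ) : ℝ) = m := by push_cast; linarith
  exact_mod_cast this

theorem exists_univ (A : Finset (ZMod m)) (hA : 2 * A.card = m) :
    ∃ g, Realizes g Finset.univ A := by
  classical
  refine ⟨fun i => (if i ∈ A then (2 : ℝ) else 0) - 1, ?_, ?_, ?_, ?_, Finset.subset_univ _⟩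
  · rw [Finset.sum_sub_distrib]
    have : ((2 * A.card : ℕ) : ℝ) = m := by rw [hA]
    push_cast at this
    simp [ZMod.card]; linarith
  · intro i; beta_reduce; split_ifs <;> norm_num
  · intro i; beta_reduce; split_ifs with h <;> simp [h] <;> norm_num
  · intro i; beta_reduce; split_ifs with h <;> simp [h] <;> norm_num

theorem exists_small (T A : Finset (ZMod m)) (hs : A ⊆ T) (hT : T ≠ Finset.univ)
    (h1 : 2 * A.card < m) (h2 : 2 * (T \ A).card < m) :
    ∃ g, Realizes g T A := by
  classical
  have hc : (T \ A).card + A.card = T.card := Finset.card_sdiff_add_card_eq_card hs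
  have hTm : T.card < m := by omega
  have hcc : Tᶜ.card + T.card = m := by
    rw [Finset.card_compl_add_card]; exact ZMod.card m
  have hpos : (0 : ℝ) < Tᶜ.card := by
    have : 0 < Tᶜ.card := by omega
    exact_mod_cast this
  have hc' : ((T \ A).card : ℝ) + A.card = T.card := by exact_mod_cast hc
  have hcc' : (Tᶜ.card : ℝ) + T.card = m := by exact_mod_cast hcc
  have h1' : 2 * (A.card : ℝ) < m := by exact_mod_cast h1
  have h2' : 2 * ((T \ A).card : ℝ) < m := by exact_mod_cast h2
  set q : ℝ := (((T \ A).card : ℝ) - A.card) / Tᶜ.card with hq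
  have hq1 : q < 1 := by rw [hq, div_lt_one hpos]; linarith
  have hq2 : -1 < q := by rw [hq, lt_div_iff₀ hpos]; linarith
  have hqe : Tᶜ.card * q = ((T \ A).card : ℝ) - A.card := by
    rw [hq]; field_simp
  refine ⟨fun i => if i ∈ A then 1 else if i ∈ T then -1 else q, ?_, ?_, ?_, ?_, hs⟩
  · rw [← Finset.sum_add_sum_compl T, ← Finset.sum_sdiff hs]
    have e1 : ∑ x ∈ T \ A, (if x ∈ A then (1 : ℝ) else if x ∈ T then -1 else q) = - (T \ A).card := by
      rw [Finset.sum_congr rfl (g := fun _ => (-1 : ℝ))]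
      · simp
      · intro i hi; simp at hi; simp [hi]
    have e2 : ∑ x ∈ A, (if x ∈ A then (1 : ℝ) else if x ∈ T then -1 else q) = A.card := by
      rw [Finset.sum_congr rfl (g := fun _ => (1 : ℝ))]
      · simp
      · intro i hi; simp [hi]
    have e3 : ∑ x ∈ Tᶜ, (if x ∈ A then (1 : ℝ) else if x ∈ T then -1 else q) = Tᶜ.card * q := by
      rw [Finset.sum_congr rfl (g := fun _ => q)]
      · simp
      · intro i hi
        have hi' : i ∉ T := by simpa using hi
        have : i ∉ A := fun h => hi' (hs h)
        simp [hi', this]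
    rw [e1, e2, e3, hqe]; ring
  · intro i
    beta_reduce
    split_ifs
    · simp
    · simp
    · exact abs_le.2 ⟨hq2.le, hq1.le⟩
  · intro i
    beta_reduce
    split_ifs with h h'
    · simp [h]
    · simp [h]; norm_num
    · simp [h, hq1.ne]
  · intro i
    beta_reduce
    split_ifs with h h'
    · simp [h]; norm_num
    · simp [h, h']
    · simp [h', hq2.ne']

end

/-- Dimension, facet numbers and face numbers of the symmetric edge polytope of an even
cycle `C_{2n}`. -/
theorem faces_of_even_cycle (n : ℕ) (hn : 2 ≤ n) :
    polyDim (DE (cycleDoubleEdges (2 * n))) = 2 * (n : ℤ) - 1 ∧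
    Nat.card {F : Set (ZMod (2 * n) → ℝ) // IsFacetOf F (DE (cycleDoubleEdges (2 * n)))} =
      Nat.choose (2 * n) n ∧
    ∀ d : ℕ, d + 1 < n →
      Nat.card {F : Set (ZMod (2 * n) → ℝ) //
          IsFaceOf F (DE (cycleDoubleEdges (2 * n))) ∧ polyDim F = (d : ℤ)} =
        Nat.choose (2 * n) (d + 1) * 2 ^ (d + 1) := by
  classical
  haveI : NeZero (2 * n) := ⟨by omega⟩
  refine ⟨?_, ?_, ?_⟩
  · rw [polyDim_P]; push_cast; ring
  · have hset : {F : Set (ZMod (2 * n) → ℝ) | IsFacetOf F (DE (cycleDoubleEdges (2 * n)))} =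
        (fun A => faceTA Finset.univ A) ''
          ((Finset.powersetCard n (Finset.univ : Finset (ZMod (2 * n))) : Finset _) : Set _) := by
      ext F
      constructor
      · rintro ⟨hF, hd⟩
        rw [polyDim_P] at hd
        rcases (isFace_iff F).1 hF with rfl | ⟨g, T, A, hR, rfl⟩
        · rw [polyDim_P] at hd; omega
        · by_cases hT : T = Finset.univ
          · subst hT
            have := realizes_univ hR
            exact ⟨A, by simp; omega, rfl⟩
          · exfalso
            rw [polyDim_face T A hT] at hd
            have h := realizes_lt hR hT
            have hc : (T \ A).card + A.card = T.card :=
              Finset.card_sdiff_add_card_eq_card hR.2.2.2.2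
            push_cast at hd
            omega
      · rintro ⟨A, hA, rfl⟩
        have hA' : A.card = n := by simpa using hA
        obtain ⟨g, hR⟩ := exists_univ A (by omega)
        refine ⟨(isFace_iff _).2 (Or.inr ⟨g, _, A, hR, rfl⟩), ?_⟩
        rw [polyDim_P]
        simp only
        rw [polyDim_full (by omega) hR]; ring
    change Nat.card ({F : Set (ZMod (2 * n) → ℝ) | IsFacetOf F (DE (cycleDoubleEdges (2 * n)))} : Set _) = _
    rw [hset, Nat.card_coe_set_eq, Set.ncard_image_of_injOn, Set.ncard_coe_finset,
      Finset.card_powersetCard, Finset.card_univ, ZMod.card]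
    intro A hA B hB e
    have hA' : A.card = n := by simpa using hA
    have hB' : B.card = n := by simpa using hB
    obtain ⟨g, hg⟩ := exists_univ A (by omega)
    obtain ⟨g', hg'⟩ := exists_univ B (by omega)
    exact (face_inj hg hg' e).2
  · intro d hd
    let I : Finset ((_ : Finset (ZMod (2 * n))) × Finset (ZMod (2 * n))) :=
      (Finset.powersetCard (d + 1) (Finset.univ : Finset (ZMod (2 * n)))).sigma
        (fun T => T.powerset)
    have hI : ∀ p, p ∈ I ↔ p.1.card = d + 1 ∧ p.2 ⊆ p.1 := by
      intro p; simp [I]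
    have hu : ∀ T : Finset (ZMod (2 * n)), T.card = d + 1 → T ≠ Finset.univ := by
      rintro T hT rfl
      rw [Finset.card_univ, ZMod.card] at hT; omega
    have hex : ∀ p ∈ I, ∃ g, Realizes g p.1 p.2 := by
      intro p hp
      obtain ⟨h1, h2⟩ := (hI p).1 hp
      have hc : (p.1 \ p.2).card + p.2.card = p.1.card :=
        Finset.card_sdiff_add_card_eq_card h2
      exact exists_small p.1 p.2 h2 (hu _ h1) (by omega) (by omega)
    have hset : {F : Set (ZMod (2 * n) → ℝ) |
        IsFaceOf F (DE (cycleDoubleEdges (2 * n))) ∧ polyDim F = (d : ℤ)} =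
        (fun p : ((_ : Finset (ZMod (2 * n))) × Finset (ZMod (2 * n))) => faceTA p.1 p.2) ''
          (I : Set _) := by
      ext F
      constructor
      · rintro ⟨hF, hdim⟩
        rcases (isFace_iff F).1 hF with rfl | ⟨g, T, A, hR, rfl⟩
        · rw [polyDim_P] at hdim; omega
        · by_cases hT : T = Finset.univ
          · subst hT
            rw [polyDim_full (by omega) hR] at hdim; omega
          · rw [polyDim_face T A hT] at hdim
            exact ⟨⟨T, A⟩, (hI _).2 ⟨by simp only; omega, hR.2.2.2.2⟩, rfl⟩
      · rintro ⟨p, hp, rfl⟩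
        obtain ⟨g, hR⟩ := hex p hp
        refine ⟨(isFace_iff _).2 (Or.inr ⟨g, _, _, hR, rfl⟩), ?_⟩
        have h1 := ((hI p).1 hp).1
        simp only
        rw [polyDim_face _ _ (hu _ h1), h1]; push_cast; ring
    change Nat.card ({F : Set (ZMod (2 * n) → ℝ) |
        IsFaceOf F (DE (cycleDoubleEdges (2 * n))) ∧ polyDim F = (d : ℤ)} : Set _) = _
    rw [hset, Nat.card_coe_set_eq, Set.ncard_image_of_injOn, Set.ncard_coe_finset]
    · simp only [I, Finset.card_sigma, Finset.card_powerset]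
      rw [Finset.sum_congr rfl (g := fun _ => 2 ^ (d + 1))]
      · simp [ZMod.card]
      · intro T hT
        rw [(Finset.mem_powersetCard.1 hT).2]
    · rintro p hp q hq e
      obtain ⟨g, hg⟩ := hex p hp
      obtain ⟨g', hg'⟩ := hex q hq
      obtain ⟨e1, e2⟩ := face_inj hg hg' e
      cases p; cases q
      simp_all
end
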